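/- arXiv:1206.1472 — 4 statements merged into one kernel-verified Lean document; each statement's English description precedes it below -/
import Mathlib

section
/- (Ergodic theorem for quantum trajectories.) Let (ρ_n, X_n)_{n≥0} be the quantum trajectory process of the open quantum random walk. Then the Cesàro means (1/n) Σ_{i=1}^n ρ_i converge almost surely to a random density matrix θ_∞ which almost surely takes values in the set of invariant states of L, i.e. L(θ_∞) = θ_∞ almost surely. In particular, if L admits a unique invariant state ρ_∞, then (1/n) Σ_{i=1}^n ρ_i converges almost surely to ρ_∞. -/
open MeasureTheory Filter Matrix Finset
open scoped ComplexOrder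

noncomputable section

/-- The direction vectors `e_1, …, e_{2d}` in `ℤ^d`, with `e_{d+j} = -e_j`. -/
def dir (d : ℕ) (i : Fin (2 * d)) : Fin d → ℤ :=
  fun j => if (i : ℕ) < d then (if (j : ℕ) = (i : ℕ) then 1 else 0)
           else (if (j : ℕ) = (i : ℕ) - d then -1 else 0)

/-- The direction vectors viewed in `ℝ^d`. -/
def dirR (d : ℕ) (i : Fin (2 * d)) : Fin d → ℝ := fun j => (dir d i j : ℝ)

instance {k : ℕ} : MeasurableSpace (Matrix (Fin k) (Fin k) ℂ) := MeasurableSpace.pi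

/-- A density matrix: positive semidefinite with trace one. -/
def IsDensity {k : ℕ} (ρ : Matrix (Fin k) (Fin k) ℂ) : Prop := ρ.PosSemidef ∧ ρ.trace = 1

/-- The quantum trajectory process of the open quantum random walk. -/
structure IsQTraj {k d : ℕ} {Ω : Type} {mΩ : MeasurableSpace Ω}
    (A : Fin (2 * d) → Matrix (Fin k) (Fin k) ℂ)
    (μ : Measure Ω) (ℱ : Filtration ℕ mΩ)
    (ρ : ℕ → Ω → Matrix (Fin k) (Fin k) ℂ)
    (X : ℕ → Ω → Fin d → ℤ) : Prop where
  density : ∀ n, ∀ᵐ ω ∂μ, IsDensity (ρ n ω)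
  adapted_ρ : ∀ n, Measurable[ℱ n] (ρ n)
  adapted_X : ∀ n, Measurable[ℱ n] (X n)
  prob : ∀ (n : ℕ) (j : Fin (2 * d)),
    μ[(fun ω => if X (n + 1) ω = X n ω + dir d j then (1 : ℝ) else 0) | ℱ n]
      =ᵐ[μ] fun ω => ((A j * ρ n ω * (A j)ᴴ).trace).re
  update : ∀ (n : ℕ) (j : Fin (2 * d)), ∀ᵐ ω ∂μ,
    X (n + 1) ω = X n ω + dir d j →
      ρ (n + 1) ω = ((A j * ρ n ω * (A j)ᴴ).trace)⁻¹ • (A j * ρ n ω * (A j)ᴴ)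

lemma qt_kron (x : ℕ → ℝ) (c : ℝ)
    (h : Tendsto (fun n : ℕ => ∑ i ∈ range n, ((i : ℝ) + 1)⁻¹ * x i) atTop (nhds c)) :
    Tendsto (fun n : ℕ => (n : ℝ)⁻¹ * ∑ i ∈ range n, x i) atTop (nhds 0) := by
  have h2 := h.cesaro
  have h3 := h.sub h2
  rw [sub_self] at h3
  refine h3.congr' ?_
  filter_upwards [eventually_gt_atTop 0] with n hn
  have key : ∀ n : ℕ, ∑ i ∈ range n, x i = n * (∑ i ∈ range n, ((i : ℝ) + 1)⁻¹ * x i)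
      - ∑ m ∈ range n, ∑ i ∈ range m, ((i : ℝ) + 1)⁻¹ * x i := by
    intro n
    induction n with
    | zero => simp
    | succ n ih =>
      rw [sum_range_succ, ih, sum_range_succ _ n, sum_range_succ _ n]
      have : ((n : ℝ) + 1) ≠ 0 := by positivity
      push_cast
      field_simp
      ring
  rw [key n]
  have : (n : ℝ) ≠ 0 := by positivity
  field_simp

lemma qt_slln {Ω : Type} {mΩ : MeasurableSpace Ω} (μ : Measure Ω) [IsProbabilityMeasure μ]
    (ℱ : Filtration ℕ mΩ) (D : ℕ → Ω → ℝ) (C : ℝ)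
    (hm : ∀ n, StronglyMeasurable[ℱ (n + 1)] (D n))
    (hb : ∀ n, ∀ᵐ ω ∂μ, |D n ω| ≤ C)
    (hc : ∀ n, μ[D n | ℱ n] =ᵐ[μ] 0) :
    ∀ᵐ ω ∂μ, Tendsto (fun n : ℕ => (n : ℝ)⁻¹ * ∑ i ∈ range n, D i ω) atTop (nhds 0) := by
  set N : ℕ → Ω → ℝ := fun n ω => ∑ i ∈ range n, ((i : ℝ) + 1)⁻¹ * D i ω with hN
  have hNs : ∀ n, N (n + 1) = N n + ((n : ℝ) + 1)⁻¹ • D n := by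
    intro n; ext ω; simp [hN, sum_range_succ]
  have hNm : ∀ n, StronglyMeasurable[ℱ n] (N n) := by
    intro n
    induction n with
    | zero => 
      have : N 0 = fun _ => 0 := by ext ω; simp [hN]
      rw [this]; exact stronglyMeasurable_const
    | succ n ih =>
      rw [hNs]
      exact (ih.mono (ℱ.mono n.le_succ)).add ((hm n).const_smul _)
  have hNm' : ∀ n, AEStronglyMeasurable (N n) μ := fun n => ((hNm n).mono (ℱ.le n)).aestronglyMeasurable
  have hDm' : ∀ n, AEStronglyMeasurable (D n) μ := fun n => ((hm n).mono (ℱ.le _)).aestronglyMeasurable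
  have hDtop : ∀ n, MemLp (D n) ⊤ μ := fun n => memLp_top_of_bound (hDm' n) C (hb n)
  have hNtop : ∀ n, MemLp (N n) ⊤ μ := by
    intro n
    induction n with
    | zero => 
      have : N 0 = fun _ => 0 := by ext ω; simp [hN]
      rw [this]; exact memLp_const _
    | succ n ih =>
      rw [hNs]
      exact ih.add ((hDtop n).const_smul _)
  have hD2 : ∀ n, MemLp (D n) 2 μ := fun n => (hDtop n).mono_exponent le_top
  have hN2 : ∀ n, MemLp (N n) 2 μ := fun n => (hNtop n).mono_exponent le_top
  have hDi : ∀ n, Integrable (D n) μ := fun n => (hDtop n).integrable le_top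
  have hNi : ∀ n, Integrable (N n) μ := fun n => (hNtop n).integrable le_top
  have hmart : Martingale N ℱ μ := by
    refine martingale_of_condExp_sub_eq_zero_nat hNm hNi fun n => ?_
    rw [hNs, add_sub_cancel_left]
    refine (condExp_smul _ _ _).trans ?_
    filter_upwards [hc n] with ω hω
    simp [hω]
  have horth : ∀ n, ∫ ω, N n ω * D n ω ∂μ = 0 := by
    intro n
    have h1 := condExp_mul_of_stronglyMeasurable_left (μ := μ) (hNm n)
      ((hN2 n).integrable_mul (hD2 n)) (hDi n)
    have h2 : ∫ ω, (N n * D n) ω ∂μ = ∫ ω, (μ[N n * D n | ℱ n]) ω ∂μ :=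
      (integral_condExp (ℱ.le n)).symm
    have h3 : ∫ ω, (μ[N n * D n | ℱ n]) ω ∂μ = ∫ ω, (0 : ℝ) ∂μ := by
      refine integral_congr_ae ?_
      filter_upwards [h1, hc n] with ω h h'
      simp [h, h']
    simpa using h2.trans h3
  have hsq : ∀ n, ∫ ω, N n ω ^ 2 ∂μ ≤ C ^ 2 * ∑ i ∈ range n, (((i : ℝ) + 1) ^ 2)⁻¹ := by
    intro n
    induction n with
    | zero => simp [hN]
    | succ n ih =>
      have e : ∀ ω, N (n + 1) ω ^ 2 = N n ω ^ 2 + (2 * ((n : ℝ) + 1)⁻¹) * (N n ω * D n ω)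
          + ((((n : ℝ) + 1) ^ 2)⁻¹) * D n ω ^ 2 := by
        intro ω
        rw [hNs]; simp only [Pi.add_apply, Pi.smul_apply, smul_eq_mul]
        field_simp
        ring
      have i1 := (hN2 n).integrable_sq
      have i2 : Integrable (fun ω => (2 * ((n : ℝ) + 1)⁻¹) * (N n ω * D n ω)) μ :=
        ((hN2 n).integrable_mul (hD2 n)).const_mul _
      have i3 : Integrable (fun ω => ((((n : ℝ) + 1) ^ 2)⁻¹) * D n ω ^ 2) μ :=
        ((hD2 n).integrable_sq).const_mul _
      have hd : ∫ ω, D n ω ^ 2 ∂μ ≤ C ^ 2 := by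
        have : ∫ ω, D n ω ^ 2 ∂μ ≤ ∫ ω, C ^ 2 ∂μ := by
          refine integral_mono_ae (hD2 n).integrable_sq (integrable_const _) ?_
          filter_upwards [hb n] with ω hω
          exact sq_le_sq.mpr (hω.trans (le_abs_self C))
        simpa using this
      simp_rw [e]
      have i12 : Integrable (fun ω => N n ω ^ 2 + (2 * ((n : ℝ) + 1)⁻¹) * (N n ω * D n ω)) μ :=
        i1.add i2
      rw [integral_add i12 i3, integral_add i1 i2, integral_const_mul, integral_const_mul,
        horth, sum_range_succ]
      have : 0 ≤ (((n : ℝ) + 1) ^ 2)⁻¹ := by positivity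
      nlinarith
  obtain ⟨R, hR⟩ : ∃ R : ℝ, ∀ n, ∑ i ∈ range n, (((i : ℝ) + 1) ^ 2)⁻¹ ≤ R := by
    have hs : Summable (fun i : ℕ => (((i : ℝ) + 1) ^ 2)⁻¹) := by
      have := (summable_nat_add_iff 1).2 (Real.summable_nat_pow_inv (p := 2).2 (by norm_num))
      simpa using this
    exact ⟨_, fun n => hs.sum_le_tsum _ (fun i _ => by positivity)⟩
  have hbd : ∀ n, eLpNorm (N n) 1 μ ≤ (Real.toNNReal (1 + C ^ 2 * R) : NNReal) := by
    intro n
    rw [eLpNorm_one_eq_lintegral_enorm, ← ofReal_integral_norm_eq_lintegral_enorm (hNi n)]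
    refine ENNReal.ofReal_le_ofReal ?_
    calc ∫ ω, ‖N n ω‖ ∂μ ≤ ∫ ω, (1 + N n ω ^ 2) ∂μ := by
          refine integral_mono (hNi n).norm ((integrable_const _).add (hN2 n).integrable_sq) ?_
          intro ω
          simp only [Real.norm_eq_abs]
          nlinarith [sq_nonneg (|N n ω| - 1), sq_abs (N n ω), abs_nonneg (N n ω)]
      _ = 1 + ∫ ω, N n ω ^ 2 ∂μ := by
          rw [integral_add (integrable_const _) (hN2 n).integrable_sq]; simp
      _ ≤ _ := by
          have := hsq n
          have h2 := hR n
          have : C ^ 2 * ∑ i ∈ range n, (((i : ℝ) + 1) ^ 2)⁻¹ ≤ C ^ 2 * R := by gcongr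
          linarith
  filter_upwards [hmart.submartingale.exists_ae_tendsto_of_bdd hbd] with ω ⟨c, hcω⟩
  exact qt_kron _ c hcω

lemma qt_entry {k : ℕ} {σ : Matrix (Fin k) (Fin k) ℂ} (h : IsDensity σ) (a b : Fin k) :
    ‖σ a b‖ ≤ 1 := by
  obtain ⟨S, rfl⟩ : ∃ S, σ = Sᴴ * S := by
    open scoped MatrixOrder Matrix.Norms.L2Operator in
    exact CStarAlgebra.nonneg_iff_eq_star_mul_self.1 (Matrix.nonneg_iff_posSemidef.2 h.1)
  have ht := h.2
  have ht' : ∑ i, ∑ c, ‖S c i‖ ^ 2 = 1 := by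
    have := congrArg Complex.re ht
    simp only [Matrix.trace, Matrix.diag, Matrix.mul_apply, Matrix.conjTranspose_apply,
      Complex.re_sum, Complex.one_re] at this
    rw [← this]
    refine sum_congr rfl fun i _ => sum_congr rfl fun c _ => ?_
    rw [Complex.star_def, ← Complex.normSq_eq_conj_mul_self, Complex.ofReal_re, Complex.normSq_eq_norm_sq]
  have hle : ∀ i, ∑ c, ‖S c i‖ ^ 2 ≤ 1 := fun i => by
    rw [← ht']
    exact single_le_sum (f := fun i => ∑ c, ‖S c i‖ ^ 2) (fun i _ => by positivity) (mem_univ i)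
  rw [Matrix.mul_apply]
  calc ‖∑ c, Sᴴ a c * S c b‖ ≤ ∑ c, ‖Sᴴ a c * S c b‖ := norm_sum_le _ _
    _ ≤ ∑ c, (‖S c a‖ ^ 2 / 2 + ‖S c b‖ ^ 2 / 2) := by
        refine sum_le_sum fun c _ => ?_
        rw [norm_mul, Matrix.conjTranspose_apply, norm_star]
        nlinarith [sq_nonneg (‖S c a‖ - ‖S c b‖)]
    _ ≤ 1 := by
        rw [sum_add_distrib, ← sum_div, ← sum_div]
        linarith [hle a, hle b]

/-- The real functional attached to an observable. -/
def qtf {k : ℕ} (B σ : Matrix (Fin k) (Fin k) ℂ) : ℝ := ((B * σ).trace).re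

lemma qtf_bound {k : ℕ} (B : Matrix (Fin k) (Fin k) ℂ) :
    ∃ C : ℝ, ∀ σ, IsDensity σ → |qtf B σ| ≤ C := by
  refine ⟨∑ i, ∑ j, ‖B i j‖, fun σ hσ => ?_⟩
  refine (Complex.abs_re_le_norm _).trans ?_
  simp only [Matrix.trace, Matrix.diag, Matrix.mul_apply]
  refine (norm_sum_le _ _).trans (sum_le_sum fun i _ => (norm_sum_le _ _).trans
    (sum_le_sum fun j _ => ?_))
  rw [norm_mul]
  exact mul_le_of_le_one_right (norm_nonneg _) (qt_entry hσ _ _)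

/-- The Heisenberg dual map. -/
def qtT {k : ℕ} {ι : Type} [Fintype ι] (A : ι → Matrix (Fin k) (Fin k) ℂ) :
    Matrix (Fin k) (Fin k) ℂ →ₗ[ℂ] Matrix (Fin k) (Fin k) ℂ where
  toFun B := ∑ j, (A j)ᴴ * B * A j
  map_add' B C := by simp [mul_add, add_mul, sum_add_distrib]
  map_smul' c B := by simp [smul_sum]

/-- The channel. -/
def qtL {k : ℕ} {ι : Type} [Fintype ι] (A : ι → Matrix (Fin k) (Fin k) ℂ)
    (σ : Matrix (Fin k) (Fin k) ℂ) : Matrix (Fin k) (Fin k) ℂ := ∑ j, A j * σ * (A j)ᴴ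

lemma qt_dual {k : ℕ} {ι : Type} [Fintype ι] (A : ι → Matrix (Fin k) (Fin k) ℂ)
    (B σ : Matrix (Fin k) (Fin k) ℂ) : ((qtT A B) * σ).trace = (B * qtL A σ).trace := by
  simp only [qtT, qtL, LinearMap.coe_mk, AddHom.coe_mk, sum_mul, mul_sum, trace_sum]
  refine sum_congr rfl fun j _ => ?_
  rw [mul_assoc, mul_assoc, trace_mul_comm]
  simp only [mul_assoc]

lemma qtL_density {k : ℕ} {ι : Type} [Fintype ι] (A : ι → Matrix (Fin k) (Fin k) ℂ)
    (hA : ∑ j, (A j)ᴴ * A j = 1)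
    {σ : Matrix (Fin k) (Fin k) ℂ} (h : IsDensity σ) : IsDensity (qtL A σ) := by
  refine ⟨?_, ?_⟩
  · exact Matrix.posSemidef_sum _ fun j _ => h.1.mul_mul_conjTranspose_same _
  · have := qt_dual A 1 σ
    rw [one_mul] at this
    rw [← this]
    simp [qtT, hA, h.2]

lemma qt_sep {k : ℕ} (v : Matrix (Fin k) (Fin k) ℂ)
    (h : ∀ σ, IsDensity σ → (v * σ).trace = 0) : v = 0 := by
  have h1 : ∀ σ : Matrix (Fin k) (Fin k) ℂ, σ.PosSemidef → (v * σ).trace = 0 := by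
    intro σ hσ
    by_cases h0 : σ.trace = 0
    · rw [hσ.trace_eq_zero_iff.1 h0]; simp
    · have hd : IsDensity ((σ.trace)⁻¹ • σ) := by
        refine ⟨hσ.smul (inv_nonneg.2 hσ.trace_nonneg), ?_⟩
        simp [Matrix.trace_smul, h0]
      have := h _ hd
      simpa [Matrix.trace_smul, h0] using this
  have h2 : Matrix.toEuclideanLin v = 0 := by
    rw [← inner_map_self_eq_zero]
    intro x
    have := h1 _ (Matrix.posSemidef_vecMulVec_self_star (x : Fin k → ℂ))
    rw [Matrix.mul_vecMulVec, Matrix.trace_vecMulVec] at this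
    rw [EuclideanSpace.inner_eq_star_dotProduct, dotProduct_star, star_eq_zero]
    simpa using this
  simpa using h2

lemma qt_decomp {k : ℕ} {ι : Type} [Fintype ι] (A : ι → Matrix (Fin k) (Fin k) ℂ)
    (hA : ∑ j, (A j)ᴴ * A j = 1) (B : Matrix (Fin k) (Fin k) ℂ) :
    ∃ V W, qtT A V = V ∧ B = V + (qtT A W - W) := by
  set F := qtT A - LinearMap.id with hF
  have hdis : Disjoint (LinearMap.range F) (LinearMap.ker F) := by
    rw [Submodule.disjoint_def]
    rintro v ⟨w, hw⟩ hv
    have hv' : qtT A v = v := by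
      rw [LinearMap.mem_ker] at hv
      simpa [hF, sub_eq_zero] using hv
    have hw' : qtT A w = w + v := by rw [← hw]; simp [hF]
    have hL : ∀ σ, (w * qtL A σ).trace = (w * σ).trace + (v * σ).trace := by
      intro σ; rw [← qt_dual, hw', add_mul, trace_add]
    have hL' : ∀ σ, (v * qtL A σ).trace = (v * σ).trace := by
      intro σ; rw [← qt_dual, hv']
    apply qt_sep
    intro σ hσ
    have hit : ∀ n : ℕ, IsDensity ((qtL A)^[n] σ) ∧ (v * (qtL A)^[n] σ).trace = (v * σ).trace ∧
        (w * (qtL A)^[n] σ).trace = (w * σ).trace + n * (v * σ).trace := by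
      intro n
      induction n with
      | zero => simp [hσ]
      | succ n ih =>
        rw [Function.iterate_succ_apply']
        refine ⟨qtL_density A hA ih.1, by rw [hL', ih.2.1], ?_⟩
        rw [hL, ih.2.2, ih.2.1]; push_cast; ring
    have hbd : ∀ u : Matrix (Fin k) (Fin k) ℂ, ∀ c : ℂ, (∃ C : ℝ, ∀ n : ℕ, |((c * (n * u.trace))).re| ≤ C) →
        (c * u.trace).re = 0 := by
      rintro u c ⟨C, hC⟩
      by_contra hne
      obtain ⟨n, hn⟩ := exists_nat_gt (C / |(c * u.trace).re|)
      have hp : 0 < |(c * u.trace).re| := abs_pos.2 hne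
      rw [div_lt_iff₀ hp] at hn
      have := hC n
      rw [show c * (n * u.trace) = ((n : ℝ) : ℂ) * (c * u.trace) by push_cast; ring,
        Complex.re_ofReal_mul, abs_mul, Nat.abs_cast] at this
      linarith
    have hz : ∀ c : ℂ, (c * (v * σ).trace).re = 0 := by
      intro c
      apply hbd
      obtain ⟨C, hC⟩ := qtf_bound (c • w)
      refine ⟨C + C, fun n => ?_⟩
      have h1 := hC _ (hit n).1
      have h2 := hC _ hσ
      have : (c * (n * (v * σ).trace)).re = qtf (c • w) ((qtL A)^[n] σ) - qtf (c • w) σ := by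
        simp only [qtf, smul_mul, trace_smul, (hit n).2.2, smul_eq_mul, ← Complex.sub_re]
        congr 1; ring
      rw [this]
      exact (abs_sub _ _).trans (add_le_add h1 h2)
    apply Complex.ext
    · simpa using hz 1
    · simpa using hz (-Complex.I)
  have htop : LinearMap.range F ⊔ LinearMap.ker F = ⊤ := by
    apply Submodule.eq_top_of_disjoint _ _ _ hdis
    exact (LinearMap.finrank_range_add_finrank_ker F).ge
  have hB : B ∈ LinearMap.range F ⊔ LinearMap.ker F := htop ▸ Submodule.mem_top
  obtain ⟨y, ⟨W, hW⟩, V, hV, rfl⟩ := Submodule.mem_sup.1 hB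
  refine ⟨V, W, ?_, ?_⟩
  · rw [LinearMap.mem_ker] at hV
    simpa [hF, sub_eq_zero] using hV
  · rw [← hW]; simp [hF, add_comm]

lemma qt_dir_inj (d : ℕ) : Function.Injective (dir d) := by
  intro i i' h
  have hi := i.2
  have hi' := i'.2
  ext
  by_cases h1 : (i : ℕ) < d
  · have := congrFun h ⟨i, h1⟩
    simp only [dir, h1, if_true] at this
    split_ifs at this <;> omega
  · have := congrFun h ⟨i - d, by omega⟩
    simp only [dir, h1, if_true, if_false] at this
    split_ifs at this <;> omega

instance qt_borel {k : ℕ} : BorelSpace (Matrix (Fin k) (Fin k) ℂ) :=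
  inferInstanceAs (BorelSpace (Fin k → Fin k → ℂ))

lemma qtf_cont {k : ℕ} (B : Matrix (Fin k) (Fin k) ℂ) : Continuous (qtf B) := by
  unfold qtf
  fun_prop

lemma qt_trace_ofReal {k : ℕ} {σ : Matrix (Fin k) (Fin k) ℂ} (h : σ.PosSemidef) :
    ((σ.trace.re : ℝ) : ℂ) = σ.trace := by
  have := h.trace_nonneg
  rw [Complex.nonneg_iff] at this
  apply Complex.ext <;> simp [this.2]

lemma qt_trace_qtL {k : ℕ} {ι : Type} [Fintype ι] (A : ι → Matrix (Fin k) (Fin k) ℂ)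
    (B σ : Matrix (Fin k) (Fin k) ℂ) :
    ∑ j, qtf B (A j * σ * (A j)ᴴ) = qtf (qtT A B) σ := by
  rw [qtf, qt_dual, qtL, mul_sum, trace_sum, Complex.re_sum]
  rfl

section
variable {k d : ℕ} {Ω : Type} {mΩ : MeasurableSpace Ω}
    {A : Fin (2 * d) → Matrix (Fin k) (Fin k) ℂ}
    {μ : Measure Ω} [IsProbabilityMeasure μ]
    {ℱ : Filtration ℕ mΩ}
    {ρ : ℕ → Ω → Matrix (Fin k) (Fin k) ℂ} {X : ℕ → Ω → Fin d → ℤ}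

lemma qt_ind_meas (hQT : IsQTraj A μ ℱ ρ X) (n : ℕ) (j : Fin (2 * d)) :
    Measurable (fun ω => if X (n + 1) ω = X n ω + dir d j then (1 : ℝ) else 0) := by
  have h1 : Measurable (X (n + 1)) := (hQT.adapted_X (n + 1)).mono (ℱ.le _) le_rfl
  have h2 : Measurable (X n) := (hQT.adapted_X n).mono (ℱ.le _) le_rfl
  refine Measurable.ite ?_ measurable_const measurable_const
  exact measurableSet_eq_fun h1 (h2.add_const _)

lemma qt_ind_int (hQT : IsQTraj A μ ℱ ρ X) (n : ℕ) (j : Fin (2 * d)) :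
    Integrable (fun ω => if X (n + 1) ω = X n ω + dir d j then (1 : ℝ) else 0) μ := by
  refine Integrable.of_bound (qt_ind_meas hQT n j).aestronglyMeasurable 1 (ae_of_all _ fun ω => ?_)
  split_ifs <;> simp

lemma qt_ind_sum (hA : ∑ j, (A j)ᴴ * A j = 1) (hQT : IsQTraj A μ ℱ ρ X) (n : ℕ) :
    ∀ᵐ ω ∂μ, ∑ j, (if X (n + 1) ω = X n ω + dir d j then (1 : ℝ) else 0) = 1 := by
  have hle : ∀ ω, ∑ j, (if X (n + 1) ω = X n ω + dir d j then (1 : ℝ) else 0) ≤ 1 := by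
    intro ω
    by_cases h : ∃ j, X (n + 1) ω = X n ω + dir d j
    · obtain ⟨j, hj⟩ := h
      rw [sum_eq_single j]
      · simp [hj]
      · intro b _ hb
        rw [if_neg]
        intro hb'
        exact hb (qt_dir_inj d (add_left_cancel (hb'.symm.trans hj)))
      · simp
    · push Not at h
      simp [h]
  have hint : ∫ ω, (∑ j, (if X (n + 1) ω = X n ω + dir d j then (1 : ℝ) else 0)) ∂μ = 1 := by
    rw [integral_finset_sum _ fun j _ => qt_ind_int hQT n j]
    have h1 : ∀ j, ∫ ω, (if X (n + 1) ω = X n ω + dir d j then (1 : ℝ) else 0) ∂μ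
        = ∫ ω, qtf 1 (A j * ρ n ω * (A j)ᴴ) ∂μ := by
      intro j
      rw [← integral_condExp (ℱ.le n)]
      refine integral_congr_ae ?_
      filter_upwards [hQT.prob n j] with ω hω
      rw [hω, qtf, one_mul]
    have h2 : ∀ j, Integrable (fun ω => qtf 1 (A j * ρ n ω * (A j)ᴴ)) μ := by
      intro j
      refine (integrable_condExp (μ := μ) (m := ℱ n)
        (f := fun ω => if X (n + 1) ω = X n ω + dir d j then (1 : ℝ) else 0)).congr ?_
      filter_upwards [hQT.prob n j] with ω hω
      rw [hω, qtf, one_mul]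
    simp_rw [h1]
    rw [← integral_finset_sum _ fun j _ => h2 j]
    have : ∫ ω, ∑ j, qtf 1 (A j * ρ n ω * (A j)ᴴ) ∂μ = ∫ ω, (1 : ℝ) ∂μ := by
      refine integral_congr_ae ?_
      filter_upwards [hQT.density n] with ω hω
      rw [qt_trace_qtL]
      simp [qtf, qtT, hA, hω.2]
    simpa using this
  have hi : Integrable (fun ω => ∑ j, (if X (n + 1) ω = X n ω + dir d j then (1 : ℝ) else 0)) μ :=
    integrable_finset_sum _ fun j _ => qt_ind_int hQT n j
  have h0 : ∫ ω, (1 - ∑ j, (if X (n + 1) ω = X n ω + dir d j then (1 : ℝ) else 0)) ∂μ = 0 := by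
    rw [integral_sub (integrable_const _) hi, hint]; simp
  rw [integral_eq_zero_iff_of_nonneg (fun ω => sub_nonneg.2 (hle ω))
    ((integrable_const _).sub hi)] at h0
  filter_upwards [h0] with ω hω
  simp only [Pi.zero_apply] at hω
  linarith

lemma qt_f_int (hQT : IsQTraj A μ ℱ ρ X) (B : Matrix (Fin k) (Fin k) ℂ) (n : ℕ) :
    Integrable (fun ω => qtf B (ρ n ω)) μ := by
  obtain ⟨C, hC⟩ := qtf_bound B
  refine Integrable.of_bound ((qtf_cont B).measurable.comp
    ((hQT.adapted_ρ n).mono (ℱ.le n) le_rfl)).aestronglyMeasurable C ?_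
  filter_upwards [hQT.density n] with ω hω
  exact hC _ hω

lemma qt_condExp (hA : ∑ j, (A j)ᴴ * A j = 1) (hQT : IsQTraj A μ ℱ ρ X)
    (B : Matrix (Fin k) (Fin k) ℂ) (n : ℕ) :
    μ[fun ω => qtf B (ρ (n + 1) ω) | ℱ n] =ᵐ[μ] fun ω => qtf (qtT A B) (ρ n ω) := by
  set I : Fin (2 * d) → Ω → ℝ := fun j ω =>
    if X (n + 1) ω = X n ω + dir d j then (1 : ℝ) else 0 with hI
  set G : Fin (2 * d) → Matrix (Fin k) (Fin k) ℂ → ℝ := fun j σ =>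
    qtf B (((A j * σ * (A j)ᴴ).trace)⁻¹ • (A j * σ * (A j)ᴴ)) with hG
  have hGm : ∀ j, Measurable (G j) := by
    intro j
    have e : G j = fun σ => (((A j * σ * (A j)ᴴ).trace)⁻¹ * (B * (A j * σ * (A j)ᴴ)).trace).re := by
      ext σ
      simp [hG, qtf, trace_smul]
    rw [e]
    have c1 : Continuous fun σ : Matrix (Fin k) (Fin k) ℂ => (A j * σ * (A j)ᴴ).trace := by fun_prop
    have c2 : Continuous fun σ : Matrix (Fin k) (Fin k) ℂ => (B * (A j * σ * (A j)ᴴ)).trace := by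
      fun_prop
    exact Complex.measurable_re.comp (c1.measurable.inv.mul c2.measurable)
  have hae : ∀ j, (fun ω => G j (ρ n ω)) * I j =ᵐ[μ] fun ω => qtf B (ρ (n + 1) ω) * I j ω := by
    intro j
    filter_upwards [hQT.update n j] with ω hω
    simp only [Pi.mul_apply, hI]
    split_ifs with h
    · rw [hω h]
    · simp
  have hint : ∀ j, Integrable ((fun ω => G j (ρ n ω)) * I j) μ := by
    intro j
    rw [integrable_congr (hae j)]
    refine (qt_f_int hQT B (n + 1)).mul_bdd (c := 1) (qt_ind_meas hQT n j).aestronglyMeasurable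
      (ae_of_all _ fun ω => ?_)
    simp only [hI]
    split_ifs <;> simp
  have hsum : (fun ω => qtf B (ρ (n + 1) ω)) =ᵐ[μ] ∑ j, (fun ω => G j (ρ n ω)) * I j := by
    filter_upwards [qt_ind_sum hA hQT n, ae_all_iff.2 hae] with ω h1 h2
    rw [Finset.sum_apply]
    simp_rw [h2]
    rw [← mul_sum, h1, mul_one]
  have hj : ∀ j, μ[(fun ω => G j (ρ n ω)) * I j | ℱ n] =ᵐ[μ]
      fun ω => qtf B (A j * ρ n ω * (A j)ᴴ) := by
    intro j
    have hsm : StronglyMeasurable[ℱ n] (fun ω => G j (ρ n ω)) :=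
      ((hGm j).comp (hQT.adapted_ρ n)).stronglyMeasurable
    refine (condExp_mul_of_stronglyMeasurable_left hsm (hint j) (qt_ind_int hQT n j)).trans ?_
    filter_upwards [hQT.prob n j, hQT.density n] with ω h1 h2
    rw [Pi.mul_apply, h1]
    have hp : (A j * ρ n ω * (A j)ᴴ).PosSemidef := h2.1.mul_mul_conjTranspose_same _
    by_cases h0 : (A j * ρ n ω * (A j)ᴴ).trace = 0
    · rw [hp.trace_eq_zero_iff.1 h0]; simp [qtf]
    · simp only [hG, qtf, Matrix.mul_smul, trace_smul, smul_eq_mul]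
      rw [← Complex.re_mul_ofReal, qt_trace_ofReal hp]
      congr 1
      field_simp
  refine (condExp_congr_ae hsum).trans ((condExp_finset_sum (fun j _ => hint j) _).trans ?_)
  filter_upwards [ae_all_iff.2 hj] with ω h
  rw [Finset.sum_apply, ← qt_trace_qtL]
  exact sum_congr rfl fun j _ => h j

lemma qt_conv_fix (hA : ∑ j, (A j)ᴴ * A j = 1) (hQT : IsQTraj A μ ℱ ρ X)
    (B : Matrix (Fin k) (Fin k) ℂ) (hB : qtT A B = B) :
    ∀ᵐ ω ∂μ, ∃ c, Tendsto (fun n => qtf B (ρ n ω)) atTop (nhds c) := by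
  have hm : Martingale (fun n ω => qtf B (ρ n ω)) ℱ μ := by
    refine martingale_nat (fun n => ((qtf_cont B).measurable.comp
      (hQT.adapted_ρ n)).stronglyMeasurable) (qt_f_int hQT B) fun n => ?_
    have := qt_condExp hA hQT B n
    rw [hB] at this
    exact this.symm
  obtain ⟨C, hC⟩ := qtf_bound B
  refine hm.submartingale.exists_ae_tendsto_of_bdd (R := C.toNNReal) fun n => ?_
  refine (eLpNorm_le_of_ae_bound (C := C) ?_).trans ?_
  · filter_upwards [hQT.density n] with ω hω
    exact hC _ hω
  · simp [ENNReal.ofReal]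

lemma qt_div_zero (a : ℕ → ℝ) (C : ℝ) (h : ∀ n, |a n| ≤ C) :
    Tendsto (fun n : ℕ => (n : ℝ)⁻¹ * a n) atTop (nhds 0) := by
  refine (tendsto_inv_atTop_nhds_zero_nat (𝕜 := ℝ)).zero_mul_isBoundedUnder_le ?_
  exact ⟨C, by simpa using ⟨0, fun n _ => h n⟩⟩

lemma qt_conv_cob (hA : ∑ j, (A j)ᴴ * A j = 1) (hQT : IsQTraj A μ ℱ ρ X)
    (W : Matrix (Fin k) (Fin k) ℂ) :
    ∀ᵐ ω ∂μ, Tendsto (fun n : ℕ => (n : ℝ)⁻¹ * ∑ i ∈ range n, qtf (qtT A W - W) (ρ i ω))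
      atTop (nhds 0) := by
  obtain ⟨C, hC⟩ := qtf_bound W
  obtain ⟨C', hC'⟩ := qtf_bound (qtT A W)
  have hs := qt_slln μ ℱ (fun n ω => qtf W (ρ (n + 1) ω) - qtf (qtT A W) (ρ n ω)) (C + C')
    (fun n => by
      refine StronglyMeasurable.sub ?_ ?_
      · exact ((qtf_cont W).measurable.comp (hQT.adapted_ρ (n + 1))).stronglyMeasurable
      · exact ((qtf_cont _).measurable.comp
          ((hQT.adapted_ρ n).mono (ℱ.mono n.le_succ) le_rfl)).stronglyMeasurable)
    (fun n => by
      filter_upwards [hQT.density n, hQT.density (n + 1)] with ω h1 h2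
      exact (abs_sub _ _).trans (add_le_add (hC _ h2) (hC' _ h1)))
    (fun n => by
      have h1 := qt_condExp hA hQT W n
      have h2 : μ[fun ω => qtf (qtT A W) (ρ n ω) | ℱ n] = fun ω => qtf (qtT A W) (ρ n ω) :=
        condExp_of_stronglyMeasurable (ℱ.le n) ((qtf_cont _).measurable.comp
          (hQT.adapted_ρ n)).stronglyMeasurable (qt_f_int hQT _ n)
      refine (condExp_sub (qt_f_int hQT W (n + 1)) (qt_f_int hQT (qtT A W) n) _).trans ?_
      rw [h2]
      filter_upwards [h1] with ω h
      simp [h])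
  filter_upwards [hs, ae_all_iff.2 hQT.density] with ω h hd
  have h2 := qt_div_zero (fun n => qtf W (ρ n ω) - qtf W (ρ 0 ω)) (C + C)
    (fun n => (abs_sub _ _).trans (add_le_add (hC _ (hd n)) (hC _ (hd 0))))
  have h3 := h2.sub h
  rw [sub_zero] at h3
  refine h3.congr fun n => ?_
  rw [← mul_sub, ← sum_range_sub (fun n => qtf W (ρ n ω)), ← sum_sub_distrib]
  congr 1
  refine sum_congr rfl fun i _ => ?_
  simp only [qtf, sub_mul, trace_sub, Complex.sub_re]
  ring

lemma qt_shift (a : ℕ → ℝ) (C c : ℝ) (hb : ∀ n, |a n| ≤ C)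
    (h : Tendsto (fun n : ℕ => (n : ℝ)⁻¹ * ∑ i ∈ range n, a i) atTop (nhds c)) :
    Tendsto (fun n : ℕ => (n : ℝ)⁻¹ * ∑ i ∈ Icc 1 n, a i) atTop (nhds c) := by
  have h2 := qt_div_zero (fun n => a n - a 0) (C + C)
    (fun n => (abs_sub _ _).trans (add_le_add (hb n) (hb 0)))
  have h3 := h.add h2
  rw [add_zero] at h3
  refine h3.congr fun n => ?_
  rw [← mul_add, ← sum_range_sub, ← sum_add_distrib]
  congr 1
  rw [← Finset.Ico_add_one_right_eq_Icc, sum_Ico_eq_sum_range]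
  refine sum_congr (by simp) fun i _ => ?_
  rw [add_comm 1 i]; ring

lemma qt_conv (hA : ∑ j, (A j)ᴴ * A j = 1) (hQT : IsQTraj A μ ℱ ρ X)
    (B : Matrix (Fin k) (Fin k) ℂ) :
    ∀ᵐ ω ∂μ, ∃ c, Tendsto (fun n : ℕ => (n : ℝ)⁻¹ * ∑ i ∈ Icc 1 n, qtf B (ρ i ω))
      atTop (nhds c) := by
  obtain ⟨V, W, hV, rfl⟩ := qt_decomp A hA B
  obtain ⟨C, hC⟩ := qtf_bound (V + (qtT A W - W))
  filter_upwards [qt_conv_fix hA hQT V hV, qt_conv_cob hA hQT W, ae_all_iff.2 hQT.density]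
    with ω ⟨c, h1⟩ h2 hd
  refine ⟨c + 0, qt_shift _ C _ (fun n => hC _ (hd n)) ((h1.cesaro.add h2).congr fun n => ?_)⟩
  rw [← mul_add, ← sum_add_distrib]
  congr 1
  refine sum_congr rfl fun i _ => ?_
  simp only [qtf, add_mul, trace_add, Complex.add_re]

lemma qt_conv_zero (hA : ∑ j, (A j)ᴴ * A j = 1) (hQT : IsQTraj A μ ℱ ρ X)
    (W : Matrix (Fin k) (Fin k) ℂ) :
    ∀ᵐ ω ∂μ, Tendsto (fun n : ℕ => (n : ℝ)⁻¹ * ∑ i ∈ Icc 1 n, qtf (qtT A W - W) (ρ i ω))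
      atTop (nhds 0) := by
  obtain ⟨C, hC⟩ := qtf_bound (qtT A W - W)
  filter_upwards [qt_conv_cob hA hQT W, ae_all_iff.2 hQT.density] with ω h2 hd
  exact qt_shift _ C _ (fun n => hC _ (hd n)) h2

lemma qtf_re (σ : Matrix (Fin k) (Fin k) ℂ) (a b : Fin k) :
    qtf (Matrix.single b a 1) σ = (σ a b).re := by
  simp [qtf, Matrix.trace_single_mul]

lemma qtf_im (σ : Matrix (Fin k) (Fin k) ℂ) (a b : Fin k) :
    qtf (Matrix.single b a (-Complex.I)) σ = (σ a b).im := by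
  simp [qtf, Matrix.trace_single_mul]

lemma qtf_mean (B : Matrix (Fin k) (Fin k) ℂ) (s : ℕ → Matrix (Fin k) (Fin k) ℂ) (n : ℕ) :
    qtf B ((n : ℝ)⁻¹ • ∑ i ∈ Icc 1 n, s i) = (n : ℝ)⁻¹ * ∑ i ∈ Icc 1 n, qtf B (s i) := by
  simp only [qtf, Matrix.mul_smul, trace_smul, Matrix.mul_sum, trace_sum, Complex.real_smul,
    Complex.re_ofReal_mul, Complex.re_sum]

lemma qt_isClosed : IsClosed {σ : Matrix (Fin k) (Fin k) ℂ | IsDensity σ} := by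
  have : {σ : Matrix (Fin k) (Fin k) ℂ | IsDensity σ} =
      (⋂ x : Fin k → ℂ, {σ | 0 ≤ star x ⬝ᵥ (σ *ᵥ x)}) ∩ ({σ | σᴴ = σ} ∩ {σ | σ.trace = 1}) := by
    ext σ
    simp only [IsDensity, Matrix.posSemidef_iff_dotProduct_mulVec, Matrix.IsHermitian,
      Set.mem_inter_iff, Set.mem_iInter, Set.mem_setOf_eq]
    tauto
  rw [this]
  refine IsClosed.inter (isClosed_iInter fun x => ?_) (IsClosed.inter ?_ ?_)
  · exact isClosed_le continuous_const (by fun_prop)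
  · exact isClosed_eq (by fun_prop) (by fun_prop)
  · exact isClosed_eq (by fun_prop) (by fun_prop)

lemma qt_mean_density (s : ℕ → Matrix (Fin k) (Fin k) ℂ) (hs : ∀ n, IsDensity (s n))
    (n : ℕ) (hn : 0 < n) : IsDensity ((n : ℝ)⁻¹ • ∑ i ∈ Icc 1 n, s i) := by
  refine ⟨(Matrix.posSemidef_sum _ fun i _ => (hs i).1).smul (by positivity), ?_⟩
  have : (n : ℂ) ≠ 0 := by exact_mod_cast hn.ne'
  simp [trace_smul, trace_sum, (hs _).2, Complex.real_smul, this]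

lemma qt_main (hA : ∑ j, (A j)ᴴ * A j = 1) (hQT : IsQTraj A μ ℱ ρ X) :
    ∀ᵐ ω ∂μ, ∃ θ : Matrix (Fin k) (Fin k) ℂ,
      Tendsto (fun n : ℕ => (n : ℝ)⁻¹ • ∑ i ∈ Finset.Icc 1 n, ρ i ω) atTop (nhds θ) ∧
        IsDensity θ ∧ (∑ j, A j * θ * (A j)ᴴ) = θ := by
  have h1 := ae_all_iff.2 fun a : Fin k => ae_all_iff.2 fun b : Fin k =>
    qt_conv hA hQT (Matrix.single b a 1)
  have h2 := ae_all_iff.2 fun a : Fin k => ae_all_iff.2 fun b : Fin k =>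
    qt_conv hA hQT (Matrix.single b a (-Complex.I))
  have h3 := ae_all_iff.2 fun a : Fin k => ae_all_iff.2 fun b : Fin k =>
    qt_conv_zero hA hQT (Matrix.single b a 1)
  have h4 := ae_all_iff.2 fun a : Fin k => ae_all_iff.2 fun b : Fin k =>
    qt_conv_zero hA hQT (Matrix.single b a (-Complex.I))
  filter_upwards [h1, h2, h3, h4, ae_all_iff.2 hQT.density] with ω h1 h2 h3 h4 hd
  choose x hx using h1
  choose y hy using h2
  have ht : Tendsto (fun n : ℕ => (n : ℝ)⁻¹ • ∑ i ∈ Finset.Icc 1 n, ρ i ω) atTop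
      (nhds (Matrix.of fun a b => (⟨x a b, y a b⟩ : ℂ))) := by
    refine tendsto_pi_nhds.2 fun a => tendsto_pi_nhds.2 fun b => ?_
    have e1 := hx a b
    have e2 := hy a b
    simp_rw [← qtf_mean, qtf_re] at e1
    simp_rw [← qtf_mean, qtf_im] at e2
    have := ((Complex.continuous_ofReal.tendsto _).comp e1).add
      (((Complex.continuous_ofReal.tendsto _).comp e2).mul_const Complex.I)
    simp only [Function.comp_def, Complex.re_add_im] at this
    rw [← Complex.mk_eq_add_mul_I] at this
    exact this
  refine ⟨_, ht, ?_, ?_⟩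
  · refine qt_isClosed.mem_of_tendsto ht ?_
    filter_upwards [eventually_gt_atTop 0] with n hn
    exact qt_mean_density _ hd n hn
  · generalize (Matrix.of fun a b => (⟨x a b, y a b⟩ : ℂ)) = θ at ht
    have hz : ∀ W, Tendsto (fun n : ℕ => (n : ℝ)⁻¹ * ∑ i ∈ Icc 1 n, qtf (qtT A W - W) (ρ i ω))
        atTop (nhds 0) → qtf W (qtL A θ) = qtf W θ := by
      intro W hW
      simp_rw [← qtf_mean] at hW
      have := tendsto_nhds_unique hW (((qtf_cont _).tendsto θ).comp ht)
      simp only [qtf, sub_mul, trace_sub, Complex.sub_re, qt_dual] at this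
      simp only [qtf]
      linarith
    change qtL A θ = θ
    ext a b
    apply Complex.ext
    · have := hz _ (h3 a b)
      rwa [qtf_re, qtf_re] at this
    · have := hz _ (h4 a b)
      rwa [qtf_im, qtf_im] at this

end

/-- (Ergodic theorem for quantum trajectories.) The Cesàro means
`(1/n) Σ_{i=1}^n ρ_i` converge almost surely to a random density matrix `θ_∞` which is
almost surely an invariant state of `L`; if moreover `L` has a unique invariant state
`ρ_∞`, the Cesàro means converge almost surely to `ρ_∞`. -/
theorem stmt3 {k d : ℕ} (hd : 1 ≤ d)
    (A : Fin (2 * d) → Matrix (Fin k) (Fin k) ℂ)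
    (hA : ∑ j, (A j)ᴴ * A j = 1)
    {Ω : Type} {mΩ : MeasurableSpace Ω} (μ : Measure Ω) [IsProbabilityMeasure μ]
    (ℱ : Filtration ℕ mΩ)
    (ρ : ℕ → Ω → Matrix (Fin k) (Fin k) ℂ) (X : ℕ → Ω → Fin d → ℤ)
    (hQT : IsQTraj A μ ℱ ρ X) :
    ∃ θ : Ω → Matrix (Fin k) (Fin k) ℂ,
      (∀ᵐ ω ∂μ,
        Tendsto (fun n : ℕ => (n : ℝ)⁻¹ • ∑ i ∈ Finset.Icc 1 n, ρ i ω) atTop (nhds (θ ω)) ∧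
        IsDensity (θ ω) ∧ (∑ j, A j * θ ω * (A j)ᴴ) = θ ω) ∧
      (∀ ρ_inf : Matrix (Fin k) (Fin k) ℂ, IsDensity ρ_inf →
        (∑ j, A j * ρ_inf * (A j)ᴴ) = ρ_inf →
        (∀ σ, IsDensity σ → (∑ j, A j * σ * (A j)ᴴ) = σ → σ = ρ_inf) →
        ∀ᵐ ω ∂μ,
          Tendsto (fun n : ℕ => (n : ℝ)⁻¹ • ∑ i ∈ Finset.Icc 1 n, ρ i ω) atTop
            (nhds ρ_inf)) := by
  have hm := qt_main hA hQT
  classical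
  set θ : Ω → Matrix (Fin k) (Fin k) ℂ := fun ω =>
    if h : ∃ θ : Matrix (Fin k) (Fin k) ℂ,
      Tendsto (fun n : ℕ => (n : ℝ)⁻¹ • ∑ i ∈ Finset.Icc 1 n, ρ i ω) atTop (nhds θ) ∧
        IsDensity θ ∧ (∑ j, A j * θ * (A j)ᴴ) = θ then h.choose else 0 with hθ
  have hm' : ∀ᵐ ω ∂μ,
        Tendsto (fun n : ℕ => (n : ℝ)⁻¹ • ∑ i ∈ Finset.Icc 1 n, ρ i ω) atTop (nhds (θ ω)) ∧
        IsDensity (θ ω) ∧ (∑ j, A j * θ ω * (A j)ᴴ) = θ ω := by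
    filter_upwards [hm] with ω h
    simp only [hθ, dif_pos h]
    exact h.choose_spec
  refine ⟨θ, hm', fun ρ_inf _ _ hu => ?_⟩
  filter_upwards [hm'] with ω h
  rw [← hu _ h.2.1 h.2.2]
  exact h.1
end
end

section
/- Assume (H1): the completely positive map L admits a unique invariant state ρ_∞. Then for every l ∈ ℝ^d, the equation L_l - L^*(L_l) = Σ_{i=1}^{2d} (e_i·l) A_i^* A_i - (m·l) I admits a solution L_l among k×k complex matrices, where L^*(X) = Σ_{i=1}^{2d} A_i^* X A_i is the adjoint map and m = Σ_{i=1}^{2d} Tr(A_i ρ_∞ A_i^*) e_i ∈ ℝ^d. -/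
open MeasureTheory Filter Matrix Finset
open scoped ComplexOrder

noncomputable section

/-- The drift vector `m = Σ_{i=1}^{2d} Tr(A_i ρ_∞ A_i^*) e_i ∈ ℝ^d`. -/
def mvec {k d : ℕ} (A : Fin (2 * d) → Matrix (Fin k) (Fin k) ℂ)
    (ρinf : Matrix (Fin k) (Fin k) ℂ) : Fin d → ℝ :=
  fun j => ∑ i, ((A i * ρinf * (A i)ᴴ).trace).re * dirR d i j

/-- The completely positive map as a linear map. -/
def Lmap {k n : ℕ} (A : Fin n → Matrix (Fin k) (Fin k) ℂ) :
    Matrix (Fin k) (Fin k) ℂ →ₗ[ℂ] Matrix (Fin k) (Fin k) ℂ where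
  toFun X := ∑ j, A j * X * (A j)ᴴ
  map_add' X Y := by simp [mul_add, add_mul, Finset.sum_add_distrib]
  map_smul' c X := by simp [Finset.smul_sum]

/-- The adjoint map as a linear map. -/
def Lstar {k n : ℕ} (A : Fin n → Matrix (Fin k) (Fin k) ℂ) :
    Matrix (Fin k) (Fin k) ℂ →ₗ[ℂ] Matrix (Fin k) (Fin k) ℂ where
  toFun X := ∑ j, (A j)ᴴ * X * A j
  map_add' X Y := by simp [mul_add, add_mul, Finset.sum_add_distrib]
  map_smul' c X := by simp [Finset.smul_sum]

lemma Lmap_apply {k n : ℕ} (A : Fin n → Matrix (Fin k) (Fin k) ℂ) (X) :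
    Lmap A X = ∑ j, A j * X * (A j)ᴴ := rfl

lemma Lstar_apply {k n : ℕ} (A : Fin n → Matrix (Fin k) (Fin k) ℂ) (X) :
    Lstar A X = ∑ j, (A j)ᴴ * X * A j := rfl

lemma Lmap_pos {k n : ℕ} (A : Fin n → Matrix (Fin k) (Fin k) ℂ)
    {X : Matrix (Fin k) (Fin k) ℂ} (hX : X.PosSemidef) : (Lmap A X).PosSemidef :=
  posSemidef_sum _ fun j _ => hX.mul_mul_conjTranspose_same (A j)

lemma Lmap_conj {k n : ℕ} (A : Fin n → Matrix (Fin k) (Fin k) ℂ)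
    (X : Matrix (Fin k) (Fin k) ℂ) : (Lmap A X)ᴴ = Lmap A Xᴴ := by
  simp [Lmap_apply, conjTranspose_sum, Matrix.mul_assoc]

lemma trace_Lmap_mul {k n : ℕ} (A : Fin n → Matrix (Fin k) (Fin k) ℂ)
    (X Y : Matrix (Fin k) (Fin k) ℂ) : (Lmap A X * Y).trace = (X * Lstar A Y).trace := by
  simp only [Lmap_apply, Lstar_apply, Finset.sum_mul, Finset.mul_sum, trace_sum]
  refine Finset.sum_congr rfl fun j _ => ?_
  rw [Matrix.mul_assoc, Matrix.mul_assoc, trace_mul_comm]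
  simp only [Matrix.mul_assoc]

lemma trace_Lmap {k n : ℕ} (A : Fin n → Matrix (Fin k) (Fin k) ℂ)
    (hA : ∑ j, (A j)ᴴ * A j = 1)
    (X : Matrix (Fin k) (Fin k) ℂ) : (Lmap A X).trace = X.trace := by
  have := trace_Lmap_mul A X 1
  simpa [Lstar_apply, hA] using this

lemma psd_row_zero {k : ℕ} {M : Matrix (Fin k) (Fin k) ℂ} (hM : M.PosSemidef) {i : Fin k}
    (hi : M i i = 0) (j : Fin k) : M j i = 0 ∧ M i j = 0 := by
  have h := (hM.dotProduct_mulVec_zero_iff (Pi.single i 1)).1 (by simp [hi])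
  have h1 : M j i = 0 := by simpa using congrFun h j
  refine ⟨h1, ?_⟩
  rw [← hM.1.apply i j, h1, star_zero]

lemma diag_case {k : ℕ} {M N : Matrix (Fin k) (Fin k) ℂ} (hM : M.PosSemidef) (hN : N.PosSemidef)
    (x : Fin k → ℝ) (hx : M - N = diagonal (fun i => (x i : ℂ)))
    (ht : M.trace = (diagonal (fun i => ((max (x i) 0 : ℝ) : ℂ))).trace) :
    M = diagonal (fun i => ((max (x i) 0 : ℝ) : ℂ)) := by
  have hMr : ∀ i, 0 ≤ (M i i).re ∧ (M i i).im = 0 := fun i => by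
    have := Complex.le_def.1 (hM.diag_nonneg (i := i)); simpa [eq_comm] using this
  have hNr : ∀ i, 0 ≤ (N i i).re ∧ (N i i).im = 0 := fun i => by
    have := Complex.le_def.1 (hN.diag_nonneg (i := i)); simpa [eq_comm] using this
  have hd : ∀ i, M i i - N i i = (x i : ℂ) := fun i => by
    simpa using congrFun (congrFun hx i) i
  have hdr : ∀ i, (M i i).re - (N i i).re = x i := fun i => by
    simpa using congrArg Complex.re (hd i)
  have hge : ∀ i ∈ (Finset.univ : Finset (Fin k)), max (x i) 0 ≤ (M i i).re := fun i _ => by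
    have := hdr i; have := (hMr i).1; have := (hNr i).1
    apply max_le <;> linarith
  have hs : ∑ i, max (x i) 0 = ∑ i, (M i i).re := by
    have := congrArg Complex.re ht
    simp only [Matrix.trace, Matrix.diag, diagonal_apply_eq, Complex.re_sum,
      Complex.ofReal_re] at this
    exact this.symm
  have heq := (Finset.sum_eq_sum_iff_of_le hge).1 hs
  have hMii : ∀ i, M i i = ((max (x i) 0 : ℝ) : ℂ) := fun i => by
    apply Complex.ext
    · rw [Complex.ofReal_re]; exact (heq i (Finset.mem_univ i)).symm
    · rw [Complex.ofReal_im]; exact (hMr i).2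
  ext i j
  by_cases hij : i = j
  · subst hij; simpa using hMii i
  · rw [diagonal_apply_ne _ hij]
    have hoff : M i j - N i j = 0 := by
      simpa [diagonal_apply_ne _ hij] using congrFun (congrFun hx i) j
    rcases le_total (x i) 0 with h | h
    · exact (psd_row_zero hM (by rw [hMii, max_eq_right h]; simp) j).2
    · have h2 : N i i = 0 := by
        have := hd i
        rw [hMii, max_eq_left h] at this
        simpa using this
      rw [(psd_row_zero hN h2 j).2, sub_zero] at hoff
      exact hoff

lemma herm_fixed {k n : ℕ} (A : Fin n → Matrix (Fin k) (Fin k) ℂ)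
    (hA : ∑ j, (A j)ᴴ * A j = 1) {X : Matrix (Fin k) (Fin k) ℂ} (hX : X.IsHermitian)
    (hfix : Lmap A X = X) :
    ∃ P Q : Matrix (Fin k) (Fin k) ℂ, P.PosSemidef ∧ Q.PosSemidef ∧ Lmap A P = P ∧
      Lmap A Q = Q ∧ X = P - Q := by
  obtain ⟨U, x, hU1, hU2, hXU⟩ : ∃ (U : Matrix (Fin k) (Fin k) ℂ) (x : Fin k → ℝ),
      Uᴴ * U = 1 ∧ U * Uᴴ = 1 ∧ X = U * diagonal (fun i => (x i : ℂ)) * Uᴴ := by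
    refine ⟨hX.eigenvectorUnitary, hX.eigenvalues, ?_, ?_, ?_⟩
    · exact Unitary.coe_star_mul_self _
    · exact Unitary.coe_mul_star_self _
    · exact hX.spectral_theorem
  set Dp : Matrix (Fin k) (Fin k) ℂ := diagonal (fun i => ((max (x i) 0 : ℝ) : ℂ)) with hDp
  set Dm : Matrix (Fin k) (Fin k) ℂ := diagonal (fun i => ((max (-x i) 0 : ℝ) : ℂ)) with hDm
  have hD : Dp - Dm = diagonal (fun i => (x i : ℂ)) := by
    rw [hDp, hDm, diagonal_sub]
    congr 1; ext i
    rw [← Complex.ofReal_sub]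
    congr 1
    rcases le_total (x i) 0 with h | h
    · rw [max_eq_right h, max_eq_left (by linarith)]; ring
    · rw [max_eq_left h, max_eq_right (by linarith)]; ring
  have hDpp : Dp.PosSemidef := PosSemidef.diagonal fun i => by
    simpa using Complex.zero_le_real.2 (le_max_right (x i) 0)
  have hDmp : Dm.PosSemidef := PosSemidef.diagonal fun i => by
    simpa using Complex.zero_le_real.2 (le_max_right (-x i) 0)
  have hP := hDpp.mul_mul_conjTranspose_same U
  have hQ := hDmp.mul_mul_conjTranspose_same U
  have hXPQ : X = U * Dp * Uᴴ - U * Dm * Uᴴ := by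
    rw [hXU, ← hD, Matrix.mul_sub, Matrix.sub_mul]
  have hM := (Lmap_pos A hP).conjTranspose_mul_mul_same U
  have hN := (Lmap_pos A hQ).conjTranspose_mul_mul_same U
  have hkey := diag_case hM hN x (by
    rw [← Matrix.sub_mul, ← Matrix.mul_sub, ← map_sub, ← hXPQ, hfix, hXU]
    calc _ = (Uᴴ * U) * diagonal (fun i => (x i : ℂ)) * (Uᴴ * U) := by
            simp only [Matrix.mul_assoc]
      _ = _ := by rw [hU1]; simp) (by
    rw [trace_mul_cycle, hU2, Matrix.one_mul, trace_Lmap A hA, trace_mul_cycle, hU1,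
      Matrix.one_mul])
  have hPfix : Lmap A (U * Dp * Uᴴ) = U * Dp * Uᴴ := by
    calc _ = (U * Uᴴ) * Lmap A (U * Dp * Uᴴ) * (U * Uᴴ) := by rw [hU2]; simp
      _ = U * (Uᴴ * Lmap A (U * Dp * Uᴴ) * U) * Uᴴ := by simp only [Matrix.mul_assoc]
      _ = _ := by rw [hkey]
  refine ⟨_, _, hP, hQ, hPfix, ?_, hXPQ⟩
  have : U * Dm * Uᴴ = U * Dp * Uᴴ - X := by rw [hXPQ]; abel
  rw [this, map_sub, hPfix, hfix]

lemma fixed_mult {k n : ℕ} (A : Fin n → Matrix (Fin k) (Fin k) ℂ)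
    (hA : ∑ j, (A j)ᴴ * A j = 1) (ρ : Matrix (Fin k) (Fin k) ℂ)
    (huniq : ∀ σ, IsDensity σ → Lmap A σ = σ → σ = ρ)
    {X : Matrix (Fin k) (Fin k) ℂ} (hfix : Lmap A X = X) : ∃ c : ℂ, X = c • ρ := by
  have h1 : ∀ P : Matrix (Fin k) (Fin k) ℂ, P.PosSemidef → Lmap A P = P →
      ∃ c : ℂ, P = c • ρ := by
    intro P hP hf
    by_cases h0 : P.trace = 0
    · exact ⟨0, by rw [hP.trace_eq_zero_iff.1 h0]; simp⟩
    · refine ⟨P.trace, ?_⟩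
      rw [← huniq (P.trace⁻¹ • P) ⟨hP.smul (inv_nonneg.2 hP.trace_nonneg), ?_⟩ ?_]
      · rw [smul_smul, mul_inv_cancel₀ h0, one_smul]
      · rw [trace_smul, smul_eq_mul, inv_mul_cancel₀ h0]
      · rw [map_smul, hf]
  have h2 : ∀ Y : Matrix (Fin k) (Fin k) ℂ, Y.IsHermitian → Lmap A Y = Y →
      ∃ c : ℂ, Y = c • ρ := by
    intro Y hY hf
    obtain ⟨P, Q, hP, hQ, hPf, hQf, rfl⟩ := herm_fixed A hA hY hf
    obtain ⟨a, ha⟩ := h1 P hP hPf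
    obtain ⟨b, hb⟩ := h1 Q hQ hQf
    exact ⟨a - b, by rw [sub_smul, ← ha, ← hb]⟩
  have hc : Lmap A Xᴴ = Xᴴ := by rw [← Lmap_conj, hfix]
  obtain ⟨a, ha⟩ := h2 (X + Xᴴ) (by simp [Matrix.IsHermitian, add_comm]) (by
    rw [map_add, hfix, hc])
  obtain ⟨b, hb⟩ := h2 (Complex.I • (X - Xᴴ)) (by
    simp only [Matrix.IsHermitian, conjTranspose_smul, conjTranspose_sub,
      conjTranspose_conjTranspose, Complex.star_def, Complex.conj_I]
    rw [neg_smul, ← smul_neg, neg_sub]) (by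
    rw [map_smul, map_sub, hfix, hc])
  refine ⟨(1/2 : ℂ) * (a - Complex.I * b), ?_⟩
  rw [mul_smul, sub_smul, mul_smul, ← ha, ← hb, smul_smul, Complex.I_mul_I]
  module

lemma functional_trace {k : ℕ} (f : Matrix (Fin k) (Fin k) ℂ →ₗ[ℂ] ℂ) :
    ∃ X : Matrix (Fin k) (Fin k) ℂ, ∀ Y, f Y = (X * Y).trace := by
  refine ⟨Matrix.of fun j i => f (Matrix.single i j 1), fun Y => ?_⟩
  conv_lhs => rw [matrix_eq_sum_single Y]
  simp only [map_sum, Matrix.trace, Matrix.diag, Matrix.mul_apply, of_apply]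
  rw [Finset.sum_comm]
  refine Finset.sum_congr rfl fun j _ => Finset.sum_congr rfl fun i _ => ?_
  have : Matrix.single i j (Y i j) = Y i j • Matrix.single i j (1 : ℂ) := by simp
  rw [this, map_smul, smul_eq_mul, mul_comm]

lemma solve {k n : ℕ} (A : Fin n → Matrix (Fin k) (Fin k) ℂ)
    (hA : ∑ j, (A j)ᴴ * A j = 1) (ρ : Matrix (Fin k) (Fin k) ℂ)
    (huniq : ∀ σ, IsDensity σ → Lmap A σ = σ → σ = ρ)
    (R : Matrix (Fin k) (Fin k) ℂ) (hR : (ρ * R).trace = 0) :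
    ∃ Y, Y - Lstar A Y = R := by
  by_contra hcon
  have hmem : R ∉ LinearMap.range (LinearMap.id - Lstar A) := by
    rintro ⟨Y, hY⟩
    exact hcon ⟨Y, by simpa using hY⟩
  obtain ⟨f, hf, hle⟩ := Submodule.exists_le_ker_of_notMem hmem
  obtain ⟨X, hX⟩ := functional_trace f
  have hfix : Lmap A X = X := by
    rw [ext_iff_trace_mul_right]
    intro Y
    have h0 : f (Y - Lstar A Y) = 0 := hle ⟨Y, by simp⟩
    rw [hX, Matrix.mul_sub, trace_sub, sub_eq_zero] at h0
    rw [trace_Lmap_mul, h0]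
  obtain ⟨c, hc⟩ := fixed_mult A hA ρ huniq hfix
  apply hf
  rw [hX, hc, Matrix.smul_mul, trace_smul, hR, smul_zero]

/-- Under (H1) (unique invariant state `ρ_∞` of `L`), for every `l ∈ ℝ^d`
the equation `L_l - L^*(L_l) = Σ_i (e_i·l) A_i^* A_i - (m·l) I` admits a solution. -/
theorem stmt4 {k d : ℕ} (hd : 1 ≤ d)
    (A : Fin (2 * d) → Matrix (Fin k) (Fin k) ℂ)
    (hA : ∑ j, (A j)ᴴ * A j = 1)
    (ρinf : Matrix (Fin k) (Fin k) ℂ) (hρinf : IsDensity ρinf)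
    (hinv : (∑ j, A j * ρinf * (A j)ᴴ) = ρinf)
    (huniq : ∀ σ, IsDensity σ → (∑ j, A j * σ * (A j)ᴴ) = σ → σ = ρinf)
    (l : Fin d → ℝ) :
    ∃ Ll : Matrix (Fin k) (Fin k) ℂ,
      Ll - (∑ i, (A i)ᴴ * Ll * A i) =
        (∑ i, (∑ j, dirR d i j * l j) • ((A i)ᴴ * A i)) -
          (∑ j, mvec A ρinf j * l j) • (1 : Matrix (Fin k) (Fin k) ℂ) := by
  refine solve A hA ρinf huniq _ ?_
  have hre : ∀ i, (((A i * ρinf * (A i)ᴴ).trace.re : ℝ) : ℂ) = (ρinf * ((A i)ᴴ * A i)).trace := by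
    intro i
    have h := Complex.le_def.1 (hρinf.1.mul_mul_conjTranspose_same (A i)).trace_nonneg
    have h2 : (((A i * ρinf * (A i)ᴴ).trace.re : ℝ) : ℂ) = (A i * ρinf * (A i)ᴴ).trace :=
      Complex.ext (by simp) (by simpa using h.2)
    rw [h2, Matrix.mul_assoc, trace_mul_comm, Matrix.mul_assoc]
  have hm : ∑ j, mvec A ρinf j * l j =
      ∑ i, (∑ j, dirR d i j * l j) * (A i * ρinf * (A i)ᴴ).trace.re := by
    simp only [mvec, Finset.sum_mul]
    rw [Finset.sum_comm]
    refine Finset.sum_congr rfl fun i _ => Finset.sum_congr rfl fun j _ => ?_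
    ring
  rw [hm, Matrix.mul_sub, trace_sub, Matrix.mul_smul, Matrix.mul_one, trace_smul, hρinf.2,
    Finset.mul_sum, trace_sum, sub_eq_zero, Complex.real_smul, mul_one, Complex.ofReal_sum]
  refine Finset.sum_congr rfl fun i _ => ?_
  rw [Matrix.mul_smul, trace_smul, Complex.real_smul, Complex.ofReal_mul, hre]
end
end

section
/- (Solution of the Poisson equation.) Assume (H1) and fix l ∈ ℝ^d; let L_l be a solution of L_l - L^*(L_l) = Σ_{i=1}^{2d} (e_i·l) A_i^* A_i - (m·l) I. Define f on (density matrices on ℂ^k) × {e_1,…,e_{2d}} by f(ρ, x) = Re Tr(ρ L_l) + x·l, and let P be the transition operator of the Markov chain (ρ_n, ΔX_n): (Pf)(ρ, x) = Σ_{j=1}^{2d} Tr(A_j ρ A_j^*) f( A_j ρ A_j^* / Tr(A_j ρ A_j^*), e_j ), where terms with Tr(A_j ρ A_j^*) = 0 are omitted. Then for every density matrix ρ and every x ∈ {e_1,…,e_{2d}}, f(ρ, x) − (Pf)(ρ, x) = x·l − m·l. -/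
open MeasureTheory Filter Matrix Finset
open scoped ComplexOrder

noncomputable section

/-- The function `f(ρ, x) = Re Tr(ρ L_l) + x·l` solving the Poisson equation. -/
def fPoisson {k d : ℕ} (Ll : Matrix (Fin k) (Fin k) ℂ) (l : Fin d → ℝ)
    (ρ : Matrix (Fin k) (Fin k) ℂ) (x : Fin d → ℝ) : ℝ :=
  ((ρ * Ll).trace).re + ∑ j, x j * l j

/-- The transition operator of the chain `(ρ_n, ΔX_n)` applied to `f`
(`(Pf)(ρ,x)` does not depend on `x`; terms with `Tr(A_j ρ A_j^*) = 0` are omitted,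
since then `0⁻¹ • ... = 0` and the factor in front vanishes). -/
def Pf {k d : ℕ} (A : Fin (2 * d) → Matrix (Fin k) (Fin k) ℂ)
    (Ll : Matrix (Fin k) (Fin k) ℂ) (l : Fin d → ℝ)
    (ρ : Matrix (Fin k) (Fin k) ℂ) : ℝ :=
  ∑ i, ((A i * ρ * (A i)ᴴ).trace).re *
    fPoisson Ll l (((A i * ρ * (A i)ᴴ).trace)⁻¹ • (A i * ρ * (A i)ᴴ)) (dirR d i)

/-- (Solution of the Poisson equation.) With `L_l` a solution of
`L_l - L^*(L_l) = Σ_i (e_i·l) A_i^* A_i - (m·l) I` and `f(ρ,x) = Re Tr(ρ L_l) + x·l`,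
one has `f(ρ,x) - (Pf)(ρ,x) = x·l - m·l` for every density matrix `ρ` and every
`x ∈ {e_1, …, e_{2d}}`. -/
theorem stmt6 {k d : ℕ} (hd : 1 ≤ d)
    (A : Fin (2 * d) → Matrix (Fin k) (Fin k) ℂ)
    (hA : ∑ j, (A j)ᴴ * A j = 1)
    (ρinf : Matrix (Fin k) (Fin k) ℂ) (hρinf : IsDensity ρinf)
    (hinv : (∑ j, A j * ρinf * (A j)ᴴ) = ρinf)
    (huniq : ∀ σ, IsDensity σ → (∑ j, A j * σ * (A j)ᴴ) = σ → σ = ρinf)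
    (l : Fin d → ℝ) (Ll : Matrix (Fin k) (Fin k) ℂ)
    (hLl : Ll - (∑ i, (A i)ᴴ * Ll * A i) =
      (∑ i, (∑ j, dirR d i j * l j) • ((A i)ᴴ * A i)) -
        (∑ j, mvec A ρinf j * l j) • (1 : Matrix (Fin k) (Fin k) ℂ)) :
    ∀ ρ : Matrix (Fin k) (Fin k) ℂ, IsDensity ρ → ∀ x : Fin (2 * d),
      fPoisson Ll l ρ (dirR d x) - Pf A Ll l ρ =
        (∑ j, dirR d x j * l j) - ∑ j, mvec A ρinf j * l j := by
  intro ρ hρ x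
  have key : ∀ i, ((A i * ρ * (A i)ᴴ).trace).re *
      fPoisson Ll l (((A i * ρ * (A i)ᴴ).trace)⁻¹ • (A i * ρ * (A i)ᴴ)) (dirR d i)
      = ((ρ * ((A i)ᴴ * Ll * A i)).trace).re
        + (∑ j, dirR d i j * l j) * ((ρ * ((A i)ᴴ * A i)).trace).re := by
    intro i
    have hps : (A i * ρ * (A i)ᴴ).PosSemidef := hρ.1.mul_mul_conjTranspose_same (A i)
    have h1 : (ρ * ((A i)ᴴ * Ll * A i)).trace = (A i * ρ * (A i)ᴴ * Ll).trace := by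
      rw [← Matrix.mul_assoc, Matrix.trace_mul_comm]
      simp only [Matrix.mul_assoc]
    have h2 : (ρ * ((A i)ᴴ * A i)).trace = (A i * ρ * (A i)ᴴ).trace := by
      rw [← Matrix.mul_assoc, Matrix.trace_mul_comm]
      simp only [Matrix.mul_assoc]
    rw [h1, h2]
    generalize A i * ρ * (A i)ᴴ = M at hps
    unfold fPoisson
    by_cases h0 : M.trace = 0
    · have hM : M = 0 := hps.trace_eq_zero_iff.mp h0
      simp [hM]
    · have him : M.trace.im = 0 := (Complex.nonneg_iff.mp hps.trace_nonneg).2.symm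
      have hc : M.trace = ((M.trace.re : ℝ) : ℂ) := by
        apply Complex.ext <;> simp [him]
      have hr : M.trace.re ≠ 0 := by
        intro h
        apply h0
        rw [hc, h]
        simp
      rw [hc, Matrix.smul_mul, Matrix.trace_smul, ← Complex.ofReal_inv, smul_eq_mul,
        Complex.re_ofReal_mul, Complex.ofReal_re]
      field_simp
  have h := congrArg (fun M => ((ρ * M).trace).re) hLl
  simp only [Matrix.mul_sub, Matrix.mul_sum, Matrix.trace_sub, Matrix.trace_sum, Complex.sub_re,
    Complex.re_sum, Matrix.mul_smul, Matrix.trace_smul, Complex.smul_re, Matrix.mul_one, hρ.2,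
    Complex.one_re, smul_eq_mul, mul_one] at h
  unfold Pf
  rw [Finset.sum_congr rfl (fun i _ => key i), Finset.sum_add_distrib]
  unfold fPoisson
  linarith
end
end

section
/- (Law of large numbers for open quantum random walks.) Assume (H1): L admits a unique invariant state ρ_∞, and set m = Σ_{i=1}^{2d} Tr(A_i ρ_∞ A_i^*) e_i ∈ ℝ^d. Let (ρ_n, X_n)_{n≥0} be the quantum trajectory process of the open quantum random walk. Then X_n/n converges to m almost surely. -/
open MeasureTheory Filter Matrix Finset
open scoped ComplexOrder

noncomputable section

lemma aux_kronecker (x : ℕ → ℝ) (c : ℝ)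
    (h : Tendsto (fun n => ∑ k ∈ range n, (1 / ((k : ℝ) + 1)) * x k) atTop (nhds c)) :
    Tendsto (fun n : ℕ => (∑ k ∈ range n, x k) / n) atTop (nhds 0) := by
  set S : ℕ → ℝ := fun n => ∑ k ∈ range n, (1 / ((k : ℝ) + 1)) * x k with hS
  have h1 : ∀ n : ℕ, ∑ k ∈ range n, x k = (n + 1) * S n - ∑ k ∈ range (n + 1), S k := by
    intro n
    induction n with
    | zero => simp [hS]
    | succ n ih =>
      rw [sum_range_succ, ih, sum_range_succ _ (n + 1)]
      have : S (n + 1) = S n + (1 / ((n : ℝ) + 1)) * x n := by simp [hS, sum_range_succ]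
      rw [this]
      push_cast
      field_simp
      ring
  have h2 : ∀ n : ℕ, 0 < n → (∑ k ∈ range n, x k) / n = S n - (n⁻¹ : ℝ) * ∑ k ∈ range n, S k := by
    intro n hn
    rw [h1, sum_range_succ]
    have : (n : ℝ) ≠ 0 := by positivity
    field_simp
    ring
  have h3 := h.sub h.cesaro
  rw [sub_self] at h3
  refine h3.congr' ?_
  filter_upwards [eventually_gt_atTop 0] with n hn
  rw [h2 n hn]

lemma aux_integrable {Ω : Type} {mΩ : MeasurableSpace Ω} {μ : Measure Ω} [IsProbabilityMeasure μ]
    {f : Ω → ℝ} (hf : AEStronglyMeasurable f μ) (C : ℝ) (hb : ∀ᵐ ω ∂μ, |f ω| ≤ C) :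
    Integrable f μ :=
  Integrable.of_bound hf C (by simpa [Real.norm_eq_abs] using hb)

lemma aux_sum_sq (n : ℕ) : ∑ k ∈ range (n + 1), (1 / ((k : ℝ) + 1)) ^ 2 ≤ 2 - 1 / ((n : ℝ) + 1) := by
  induction n with
  | zero => norm_num
  | succ n ih =>
    rw [sum_range_succ]
    have h : (1 / (((n + 1 : ℕ) : ℝ) + 1)) ^ 2 ≤ 1 / ((n : ℝ) + 1) - 1 / (((n + 1 : ℕ) : ℝ) + 1) := by
      push_cast
      have h1 : 1 / ((n : ℝ) + 1) - 1 / ((n : ℝ) + 1 + 1) = 1 / (((n : ℝ) + 1) * ((n : ℝ) + 1 + 1)) := by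
        field_simp
        ring
      rw [h1, div_pow, one_pow]
      apply one_div_le_one_div_of_le (by positivity)
      nlinarith
    linarith

lemma aux_lln {Ω : Type} {mΩ : MeasurableSpace Ω} (μ : Measure Ω) [IsProbabilityMeasure μ]
    (ℱ : Filtration ℕ mΩ) (Y : ℕ → Ω → ℝ) (C : NNReal)
    (hY : ∀ n, StronglyMeasurable[ℱ (n + 1)] (Y n))
    (hb : ∀ n, ∀ᵐ ω ∂μ, |Y n ω| ≤ C) :
    ∀ᵐ ω ∂μ, Tendsto (fun n : ℕ => (∑ k ∈ range n, (Y k ω - (μ[Y k | ℱ k]) ω)) / n)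
      atTop (nhds 0) := by
  set D : ℕ → Ω → ℝ := fun k => Y k - μ[Y k | ℱ k] with hD
  have hYi : ∀ n, Integrable (Y n) μ := fun n =>
    aux_integrable ((hY n).mono (ℱ.le _)).aestronglyMeasurable C (hb n)
  have hDm : ∀ n, StronglyMeasurable[ℱ (n + 1)] (D n) := fun n =>
    (hY n).sub (stronglyMeasurable_condExp.mono (ℱ.mono (Nat.le_succ n)))
  have hDb : ∀ n, ∀ᵐ ω ∂μ, |D n ω| ≤ 2 * C := by
    intro n
    filter_upwards [hb n, ae_bdd_abs_condExp_of_ae_bdd_abs (m := ℱ n) (hb n)] with ω h1 h2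
    simp only [hD, Pi.sub_apply]
    rw [abs_le] at *
    constructor <;> linarith
  have hDi : ∀ n, Integrable (D n) μ := fun n => (hYi n).sub integrable_condExp
  have hD0 : ∀ n, μ[D n | ℱ n] =ᵐ[μ] 0 := by
    intro n
    refine (condExp_sub (hYi n) integrable_condExp _).trans ?_
    rw [condExp_of_stronglyMeasurable (ℱ.le n) stronglyMeasurable_condExp integrable_condExp]
    simp
  set M : ℕ → Ω → ℝ := fun n ω => ∑ k ∈ range n, (1 / ((k : ℝ) + 1)) * D k ω with hM
  have hMs : ∀ n, M (n + 1) = M n + (1 / ((n : ℝ) + 1)) • D n := by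
    intro n; ext ω; simp [hM, sum_range_succ]
  have hMm : ∀ n, StronglyMeasurable[ℱ n] (M n) := by
    intro n
    induction n with
    | zero => simpa [hM] using stronglyMeasurable_const
    | succ n ih =>
      rw [hMs]
      exact (ih.mono (ℱ.mono (Nat.le_succ n))).add ((hDm n).const_smul _)
  have hMb : ∀ n, ∃ B : ℝ, ∀ᵐ ω ∂μ, |M n ω| ≤ B := by
    intro n
    induction n with
    | zero => exact ⟨0, by simp [hM]⟩
    | succ n ih =>
      obtain ⟨B, hB⟩ := ih
      refine ⟨B + |1 / ((n : ℝ) + 1)| * (2 * C), ?_⟩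
      filter_upwards [hB, hDb n] with ω h1 h2
      rw [hMs]
      simp only [Pi.add_apply, Pi.smul_apply, smul_eq_mul]
      refine (abs_add_le _ _).trans (add_le_add h1 ?_)
      rw [abs_mul]
      gcongr
  have hMi : ∀ n, Integrable (M n) μ := fun n => by
    obtain ⟨B, hB⟩ := hMb n
    exact aux_integrable ((hMm n).mono (ℱ.le _)).aestronglyMeasurable B hB
  have hmart : Martingale M ℱ μ := by
    refine martingale_of_condExp_sub_eq_zero_nat hMm hMi fun n => ?_
    rw [hMs, add_sub_cancel_left]
    refine (condExp_smul _ _ _).trans ?_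
    filter_upwards [hD0 n] with ω h
    simp [h]
  have hMDi : ∀ n, Integrable (M n * D n) μ := fun n => by
    obtain ⟨B, hB⟩ := hMb n
    exact (hDi n).bdd_mul ((hMm n).mono (ℱ.le _)).aestronglyMeasurable
      (by simpa [Real.norm_eq_abs] using hB)
  have horth : ∀ n, ∫ ω, M n ω * D n ω ∂μ = 0 := by
    intro n
    have h1 := condExp_mul_of_stronglyMeasurable_left (hMm n) (hMDi n) (hDi n)
    have h2 : ∫ ω, (M n * D n) ω ∂μ = ∫ ω, (μ[M n * D n | ℱ n]) ω ∂μ :=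
      (integral_condExp (ℱ.le n)).symm
    have h3 : ∫ ω, (μ[M n * D n | ℱ n]) ω ∂μ = ∫ ω, (0 : ℝ) ∂μ := by
      refine integral_congr_ae ?_
      filter_upwards [h1, hD0 n] with ω h h'
      rw [h]; simp [h']
    simpa using h2.trans h3
  have hM2i : ∀ n, Integrable (fun ω => M n ω ^ 2) μ := fun n => by
    obtain ⟨B, hB⟩ := hMb n
    refine aux_integrable (((hMm n).mono (ℱ.le _)).aestronglyMeasurable.pow 2) (B ^ 2) ?_
    filter_upwards [hB] with ω h
    rw [abs_pow]
    gcongr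
  have hD2i : ∀ n, Integrable (fun ω => D n ω ^ 2) μ := fun n => by
    refine aux_integrable (((hDm n).mono (ℱ.le _)).aestronglyMeasurable.pow 2) ((2 * C) ^ 2) ?_
    filter_upwards [hDb n] with ω h
    rw [abs_pow]
    gcongr
  have hD2 : ∀ n, ∫ ω, D n ω ^ 2 ∂μ ≤ (2 * C) ^ 2 := fun n => by
    have : ∫ ω, D n ω ^ 2 ∂μ ≤ ∫ ω, ((2 * C : ℝ)) ^ 2 ∂μ := by
      refine integral_mono_ae (hD2i n) (integrable_const _) ?_
      filter_upwards [hDb n] with ω h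
      rw [← sq_abs]
      gcongr
    simpa using this
  have hM2 : ∀ n, ∫ ω, M n ω ^ 2 ∂μ ≤ (2 * C) ^ 2 * ∑ k ∈ range n, (1 / ((k : ℝ) + 1)) ^ 2 := by
    intro n
    induction n with
    | zero => simp [hM]
    | succ n ih =>
      have : ∀ ω, M (n + 1) ω ^ 2 = M n ω ^ 2 + (2 * (1 / ((n : ℝ) + 1))) * (M n ω * D n ω)
          + (1 / ((n : ℝ) + 1)) ^ 2 * D n ω ^ 2 := by
        intro ω
        rw [hMs]; simp only [Pi.add_apply, Pi.smul_apply, smul_eq_mul]; ring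
      simp_rw [this]
      have hMDi' : Integrable (fun ω => (2 * (1 / ((n : ℝ) + 1))) * (M n ω * D n ω)) μ :=
        (hMDi n).const_mul _
      have hsum : Integrable (fun ω => M n ω ^ 2 + (2 * (1 / ((n : ℝ) + 1))) * (M n ω * D n ω)) μ :=
        (hM2i n).add hMDi'
      rw [integral_add hsum ((hD2i n).const_mul _),
        integral_add (hM2i n) hMDi', integral_const_mul, integral_const_mul,
        horth, sum_range_succ, mul_add]
      have := mul_le_mul_of_nonneg_left (hD2 n) (sq_nonneg (1 / ((n : ℝ) + 1)))
      linarith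
  have hL1 : ∀ n, eLpNorm (M n) 1 μ ≤ (Real.toNNReal (1 + (2 * C) ^ 2 * 2) : NNReal) := by
    intro n
    rw [eLpNorm_one_eq_lintegral_enorm, ← ofReal_integral_norm_eq_lintegral_enorm (hMi n)]
    refine ENNReal.ofReal_le_ofReal ?_
    have h1 : ∫ ω, ‖M n ω‖ ∂μ ≤ ∫ ω, (1 + M n ω ^ 2) ∂μ := by
      refine integral_mono (hMi n).norm ((integrable_const _).add (hM2i n)) fun ω => ?_
      rw [Real.norm_eq_abs, ← sq_abs (M n ω)]
      nlinarith [sq_nonneg (|M n ω| - 1)]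
    rw [integral_add (integrable_const _) (hM2i n)] at h1
    have h2 := hM2 n
    have h3 : (2 * C : ℝ) ^ 2 * ∑ k ∈ range n, (1 / ((k : ℝ) + 1)) ^ 2 ≤ (2 * C) ^ 2 * 2 := by
      gcongr
      refine (sum_le_sum_of_subset_of_nonneg (range_mono (Nat.le_succ n))
        (fun _ _ _ => by positivity)).trans ((aux_sum_sq n).trans ?_)
      have : (0 : ℝ) ≤ 1 / (n + 1) := by positivity
      linarith
    simp only [integral_const, probReal_univ, smul_eq_mul, one_mul] at h1
    linarith
  filter_upwards [hmart.submartingale.exists_ae_tendsto_of_bdd hL1] with ω ⟨c, hc⟩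
  exact aux_kronecker _ c hc

lemma aux_entry {k : ℕ} {ρ : Matrix (Fin k) (Fin k) ℂ} (h : IsDensity ρ) (a b : Fin k) :
    ‖ρ a b‖ ≤ 1 := by
  obtain ⟨h1, h2⟩ := h
  obtain ⟨B, rfl⟩ : ∃ B : Matrix (Fin k) (Fin k) ℂ, ρ = Bᴴ * B := by
    open scoped MatrixOrder in
    obtain ⟨B, hB⟩ := CStarAlgebra.nonneg_iff_eq_star_mul_self.mp h1.nonneg
    exact ⟨B, hB⟩
  have h3 : ∑ j, ∑ i, ‖B i j‖ ^ 2 = 1 := by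
    have := congrArg Complex.re h2
    simp only [Matrix.trace, Matrix.diag, Matrix.mul_apply, conjTranspose_apply] at this
    simp only [Complex.re_sum, Complex.one_re] at this
    rw [← this]
    refine sum_congr rfl fun j _ => sum_congr rfl fun i _ => ?_
    rw [Complex.star_def, ← Complex.normSq_eq_conj_mul_self, Complex.ofReal_re,
      Complex.normSq_eq_norm_sq]
  have h4 : ∀ j, ∑ i, ‖B i j‖ ^ 2 ≤ 1 := by
    intro j
    rw [← h3]
    exact single_le_sum (f := fun j => ∑ i, ‖B i j‖ ^ 2)
      (fun j _ => sum_nonneg fun i _ => by positivity) (mem_univ j)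
  rw [Matrix.mul_apply]
  refine (norm_sum_le _ _).trans ?_
  have : ∑ i, ‖Bᴴ a i * B i b‖ ≤ ∑ i, (‖B i a‖ ^ 2 + ‖B i b‖ ^ 2) / 2 := by
    refine sum_le_sum fun i _ => ?_
    rw [norm_mul, conjTranspose_apply, norm_star]
    nlinarith [sq_nonneg (‖B i a‖ - ‖B i b‖)]
  refine this.trans ?_
  rw [← sum_div, sum_add_distrib]
  linarith [h4 a, h4 b]

lemma aux_closed {k : ℕ} : IsClosed {ρ : Matrix (Fin k) (Fin k) ℂ | IsDensity ρ} := by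
  have : {ρ : Matrix (Fin k) (Fin k) ℂ | IsDensity ρ} =
      ({ρ | ρᴴ = ρ} ∩ ⋂ x : Fin k → ℂ, {ρ | 0 ≤ star x ⬝ᵥ (ρ *ᵥ x)}) ∩ {ρ | ρ.trace = 1} := by
    ext ρ
    simp [IsDensity, posSemidef_iff_dotProduct_mulVec, Matrix.IsHermitian]
  rw [this]
  refine (IsClosed.inter ?_ (isClosed_iInter fun x => ?_)).inter ?_
  · exact isClosed_eq (by fun_prop) (by fun_prop)
  · exact isClosed_le continuous_const (by fun_prop)
  · exact isClosed_eq (by fun_prop) (by fun_prop)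

lemma aux_compact {k : ℕ} : IsCompact {ρ : Matrix (Fin k) (Fin k) ℂ | IsDensity ρ} := by
  have h : IsCompact (Set.univ.pi fun _ : Fin k => Set.univ.pi fun _ : Fin k =>
      Metric.closedBall (0 : ℂ) 1) :=
    isCompact_univ_pi fun _ => isCompact_univ_pi fun _ => isCompact_closedBall _ _
  refine IsCompact.of_isClosed_subset h aux_closed ?_
  intro ρ hρ a _ b _
  simpa using aux_entry hρ a b

lemma aux_avg {k : ℕ} {ρ : ℕ → Matrix (Fin k) (Fin k) ℂ} (h : ∀ n, IsDensity (ρ n)) {n : ℕ}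
    (hn : 0 < n) : IsDensity ((n : ℂ)⁻¹ • ∑ i ∈ range n, ρ i) := by
  refine ⟨(posSemidef_sum _ fun i _ => (h i).1).smul (by positivity), ?_⟩
  rw [trace_smul, trace_sum]
  have : (n : ℂ) ≠ 0 := by exact_mod_cast hn.ne'
  simp [(h _).2, this]

lemma aux_det {k d : ℕ} (A : Fin (2 * d) → Matrix (Fin k) (Fin k) ℂ)
    (ρinf : Matrix (Fin k) (Fin k) ℂ)
    (huniq : ∀ σ, IsDensity σ → (∑ j, A j * σ * (A j)ᴴ) = σ → σ = ρinf)
    (ρ : ℕ → Matrix (Fin k) (Fin k) ℂ) (h : ∀ n, IsDensity (ρ n))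
    (hlim : ∀ a b, Tendsto (fun n : ℕ => (n : ℂ)⁻¹ *
      ∑ i ∈ range n, (ρ (i + 1) a b - (∑ j, A j * ρ i * (A j)ᴴ) a b)) atTop (nhds 0)) :
    Tendsto (fun n : ℕ => (n : ℂ)⁻¹ • ∑ i ∈ range n, ρ i) atTop (nhds ρinf) := by
  refine aux_compact.tendsto_nhds_of_unique_mapClusterPt ?_ ?_
  · filter_upwards [eventually_gt_atTop 0] with n hn
    exact aux_avg h hn
  intro σ hσ hcl
  refine huniq σ hσ ?_
  haveI : FirstCountableTopology (Matrix (Fin k) (Fin k) ℂ) :=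
    inferInstanceAs (FirstCountableTopology (Fin k → Fin k → ℂ))
  obtain ⟨φ, hφ, hlimφ⟩ := hcl.tendsto_subseq
  set S : ℕ → Matrix (Fin k) (Fin k) ℂ := fun n => (n : ℂ)⁻¹ • ∑ i ∈ range n, ρ i with hS
  set L : Matrix (Fin k) (Fin k) ℂ → Matrix (Fin k) (Fin k) ℂ :=
    fun σ => ∑ j, A j * σ * (A j)ᴴ with hL
  have hLc : Continuous L := by
    simp only [hL]; fun_prop
  have hLS : ∀ n, L (S n) = (n : ℂ)⁻¹ • ∑ i ∈ range n, L (ρ i) := by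
    intro n
    simp only [hL, hS]
    rw [Finset.sum_comm (s := range n), Finset.smul_sum (s := univ)]
    apply Finset.sum_congr rfl
    intro j _
    rw [Matrix.mul_smul, Matrix.smul_mul, Matrix.mul_sum, Matrix.sum_mul]
  have key : ∀ a b, Tendsto (fun n => (S n - L (S n)) a b) atTop (nhds 0) := by
    intro a b
    have hn : Tendsto (fun n : ℕ => ((n : ℂ)⁻¹)) atTop (nhds 0) := tendsto_inv_atTop_nhds_zero_nat
    have hbd : Tendsto (fun n : ℕ => (n : ℂ)⁻¹ * (ρ n a b - ρ 0 a b)) atTop (nhds 0) := by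
      refine hn.zero_mul_isBoundedUnder_le ?_
      refine isBoundedUnder_of ⟨2, fun n => ?_⟩
      have h1 := aux_entry (h n) a b
      have h2 := aux_entry (h 0) a b
      exact (norm_sub_le _ _).trans (by linarith)
    have := (hlim a b).sub hbd
    rw [sub_zero] at this
    refine this.congr fun n => ?_
    rw [hLS]
    have ht := sum_range_sub (fun i => ρ i a b) n
    simp only [hS, Matrix.sub_apply, Matrix.smul_apply, Matrix.sum_apply, smul_eq_mul] at *
    rw [← mul_sub, ← mul_sub, ← ht]
    congr 1
    rw [← sum_sub_distrib, ← sum_sub_distrib]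
    refine sum_congr rfl fun i _ => ?_
    simp only [hL, Matrix.sum_apply]
    ring
  have h1 : Tendsto (fun n => (S (φ n) - L (S (φ n)))) atTop (nhds (σ - L σ)) :=
    hlimφ.sub ((hLc.tendsto σ).comp hlimφ)
  ext a b
  have h2 : Tendsto (fun n => (S (φ n) - L (S (φ n))) a b) atTop (nhds ((σ - L σ) a b)) :=
    ((continuous_id.matrix_elem a b).tendsto _).comp h1
  have h3 := tendsto_nhds_unique h2 ((key a b).comp hφ.tendsto_atTop)
  rw [Matrix.sub_apply, sub_eq_zero] at h3
  exact h3.symm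

lemma aux_dir_inj {d : ℕ} : Function.Injective (dir d) := by
  intro i j hij
  have hi := i.2
  have hj := j.2
  ext
  by_cases h1 : (i : ℕ) < d
  · have := congrFun hij ⟨i, h1⟩
    simp only [dir, h1, if_true] at this
    split_ifs at this <;> omega
  · have := congrFun hij ⟨i - d, by omega⟩
    simp only [dir, h1, if_true, if_false] at this
    split_ifs at this <;> omega

section
variable {k d : ℕ} {A : Fin (2 * d) → Matrix (Fin k) (Fin k) ℂ}
    {Ω : Type} {mΩ : MeasurableSpace Ω} {μ : Measure Ω} [IsProbabilityMeasure μ]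
    {ℱ : Filtration ℕ mΩ}
    {ρ : ℕ → Ω → Matrix (Fin k) (Fin k) ℂ} {X : ℕ → Ω → Fin d → ℤ}

/-- indicator of the jump `j` at time `n` -/
def jmp {d : ℕ} {Ω : Type} (X : ℕ → Ω → Fin d → ℤ) (n : ℕ) (j : Fin (2 * d)) : Ω → ℝ :=
  fun ω => if X (n + 1) ω = X n ω + dir d j then (1 : ℝ) else 0

lemma jmp_abs (n : ℕ) (j : Fin (2 * d)) (ω : Ω) : |jmp X n j ω| ≤ 1 := by
  unfold jmp; split_ifs <;> simp

lemma jmp_meas (hQT : IsQTraj A μ ℱ ρ X) (n : ℕ) (j : Fin (2 * d)) :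
    StronglyMeasurable[ℱ (n + 1)] (jmp X n j) := by
  refine (Measurable.ite ?_ measurable_const measurable_const).stronglyMeasurable
  have h1 : Measurable[ℱ (n + 1)] (X n) :=
    (hQT.adapted_X n).mono (ℱ.mono (Nat.le_succ n)) le_rfl
  have h2 : Measurable[ℱ (n + 1)] (fun ω => X n ω + dir d j) := h1.add_const _
  exact measurableSet_eq_fun (hQT.adapted_X (n + 1)) h2

lemma jmp_int (hQT : IsQTraj A μ ℱ ρ X) (n : ℕ) (j : Fin (2 * d)) :
    Integrable (jmp X n j) μ :=
  aux_integrable ((jmp_meas hQT n j).mono (ℱ.le _)).aestronglyMeasurable 1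
    (ae_of_all _ (jmp_abs n j))

lemma jmp_eq {n : ℕ} {i : Fin (2 * d)} {ω : Ω} (h : X (n + 1) ω = X n ω + dir d i)
    (j : Fin (2 * d)) : jmp X n j ω = if j = i then 1 else 0 := by
  unfold jmp
  rw [h]
  congr 1
  simp [aux_dir_inj.eq_iff, eq_comm]

lemma aux_trace (hA : ∑ j, (A j)ᴴ * A j = 1) (σ : Matrix (Fin k) (Fin k) ℂ) :
    ∑ j, (A j * σ * (A j)ᴴ).trace = σ.trace := by
  have : ∀ j, (A j * σ * (A j)ᴴ).trace = ((A j)ᴴ * A j * σ).trace := fun j => by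
    rw [trace_mul_cycle]
  simp_rw [this]
  rw [← trace_sum, ← Matrix.sum_mul, hA, one_mul]

lemma aux_one (hA : ∑ j, (A j)ᴴ * A j = 1) (hQT : IsQTraj A μ ℱ ρ X) (n : ℕ) :
    ∀ᵐ ω ∂μ, ∃ i, X (n + 1) ω = X n ω + dir d i := by
  have hint : Integrable (fun ω => ∑ j, jmp X n j ω) μ :=
    integrable_finsetSum _ fun j _ => jmp_int hQT n j
  have hle : ∀ ω, ∑ j, jmp X n j ω ≤ 1 := by
    intro ω
    by_cases h : ∃ i, X (n + 1) ω = X n ω + dir d i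
    · obtain ⟨i, hi⟩ := h
      simp [jmp_eq hi]
    · push Not at h
      simp [jmp, h]
  have hI : ∀ j, ∫ ω, jmp X n j ω ∂μ = ∫ ω, ((A j * ρ n ω * (A j)ᴴ).trace).re ∂μ := by
    intro j
    rw [← integral_condExp (ℱ.le n)]
    exact integral_congr_ae (hQT.prob n j)
  have hti : ∀ j, Integrable (fun ω => ((A j * ρ n ω * (A j)ᴴ).trace).re) μ := fun j =>
    integrable_condExp.congr (hQT.prob n j)
  have h1 : ∫ ω, (1 - ∑ j, jmp X n j ω) ∂μ = 0 := by
    rw [integral_sub (integrable_const _) hint, integral_finsetSum _ fun j _ => jmp_int hQT n j]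
    simp_rw [hI]
    rw [← integral_finsetSum _ fun j _ => hti j, ← integral_sub (integrable_const _)
      (integrable_finsetSum _ fun j _ => hti j)]
    rw [← integral_zero Ω ℝ (μ := μ)]
    refine integral_congr_ae ?_
    filter_upwards [hQT.density n] with ω h
    rw [← Complex.re_sum, aux_trace hA, h.2]
    simp
  have h2 := (integral_eq_zero_iff_of_nonneg (fun ω => sub_nonneg.2 (hle ω))
    ((integrable_const _).sub hint)).1 h1
  filter_upwards [h2] with ω h
  by_contra hne
  push Not at hne
  simp [jmp, hne] at h

lemma aux_step (hQT : IsQTraj A μ ℱ ρ X)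
    (f : ℕ → Fin (2 * d) → Ω → ℝ) (hf : ∀ n j, StronglyMeasurable[ℱ n] (f n j)) (C : NNReal)
    (hC : ∀ n j, ∀ᵐ ω ∂μ, |f n j ω| ≤ C) :
    ∀ᵐ ω ∂μ, Tendsto (fun n : ℕ => (∑ i ∈ range n, (∑ j, f i j ω * jmp X i j ω
      - ∑ j, f i j ω * ((A j * ρ i ω * (A j)ᴴ).trace).re)) / n) atTop (nhds 0) := by
  have hm : ∀ n j, StronglyMeasurable[ℱ (n + 1)] (f n j * jmp X n j) := fun n j =>
    ((hf n j).mono (ℱ.mono (Nat.le_succ n))).mul (jmp_meas hQT n j)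
  have hbd : ∀ n, ∀ᵐ ω ∂μ, ∀ j, |(f n j * jmp X n j) ω| ≤ C := by
    intro n
    filter_upwards [ae_all_iff.2 (hC n)] with ω h j
    rw [Pi.mul_apply, abs_mul]
    calc _ ≤ (C : ℝ) * 1 := by gcongr; exacts [h j, jmp_abs n j ω]
      _ = C := mul_one _
  have hi : ∀ n j, Integrable (f n j * jmp X n j) μ := fun n j =>
    aux_integrable ((hm n j).mono (ℱ.le _)).aestronglyMeasurable C ((hbd n).mono fun ω h => h j)
  have hl := aux_lln μ ℱ (fun n => ∑ j, f n j * jmp X n j) (∑ _j : Fin (2 * d), C)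
    (fun n => Finset.stronglyMeasurable_sum _ fun j _ => hm n j) (by
      intro n
      filter_upwards [hbd n] with ω h
      rw [Finset.sum_apply]
      refine (abs_sum_le_sum_abs _ _).trans ?_
      push_cast
      exact sum_le_sum fun j _ => h j)
  have hc : ∀ n, μ[∑ j, f n j * jmp X n j | ℱ n] =ᵐ[μ]
      fun ω => ∑ j, f n j ω * ((A j * ρ n ω * (A j)ᴴ).trace).re := by
    intro n
    refine (condExp_finsetSum (fun j _ => hi n j) _).trans ?_
    have h1 : ∀ j, μ[f n j * jmp X n j | ℱ n] =ᵐ[μ] f n j * μ[jmp X n j | ℱ n] := fun j =>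
      condExp_mul_of_stronglyMeasurable_left (hf n j) (hi n j) (jmp_int hQT n j)
    filter_upwards [ae_all_iff.2 h1, ae_all_iff.2 (hQT.prob n)] with ω h2 h3
    rw [Finset.sum_apply]
    refine sum_congr rfl fun j _ => ?_
    rw [h2, Pi.mul_apply, ← h3]
    rfl
  filter_upwards [hl, ae_all_iff.2 hc] with ω h1 h2
  refine h1.congr fun n => ?_
  congr 1
  refine sum_congr rfl fun i _ => ?_
  rw [h2]
  simp

/-- normalised post-measurement state -/
def post (A : Fin (2 * d) → Matrix (Fin k) (Fin k) ℂ) (j : Fin (2 * d))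
    (σ : Matrix (Fin k) (Fin k) ℂ) : Matrix (Fin k) (Fin k) ℂ :=
  ((A j * σ * (A j)ᴴ).trace)⁻¹ • (A j * σ * (A j)ᴴ)

lemma trace_real {σ : Matrix (Fin k) (Fin k) ℂ} (h : IsDensity σ) (j : Fin (2 * d)) :
    (((A j * σ * (A j)ᴴ).trace).re : ℂ) = (A j * σ * (A j)ᴴ).trace := by
  have := (h.1.mul_mul_conjTranspose_same (A j)).trace_nonneg
  rw [Complex.le_def] at this
  apply Complex.ext <;> simp
  simpa using this.2

lemma post_mul {σ : Matrix (Fin k) (Fin k) ℂ} (h : IsDensity σ) (j : Fin (2 * d)) :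
    (((A j * σ * (A j)ᴴ).trace).re : ℂ) • post A j σ = A j * σ * (A j)ᴴ := by
  have hp := h.1.mul_mul_conjTranspose_same (A j)
  rw [trace_real h]
  unfold post
  by_cases h0 : (A j * σ * (A j)ᴴ).trace = 0
  · rw [h0, zero_smul, hp.trace_eq_zero_iff.1 h0]
  · rw [smul_smul, mul_inv_cancel₀ h0, one_smul]

lemma post_bd {σ : Matrix (Fin k) (Fin k) ℂ} (h : IsDensity σ) (j : Fin (2 * d)) (a b : Fin k) :
    ‖post A j σ a b‖ ≤ 1 := by
  have hp := h.1.mul_mul_conjTranspose_same (A j)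
  by_cases h0 : (A j * σ * (A j)ᴴ).trace = 0
  · simp [post, h0]
  · refine aux_entry ⟨hp.smul ?_, ?_⟩ a b
    · have := hp.trace_nonneg
      rw [← trace_real h] at this ⊢
      rw [← Complex.ofReal_inv]
      norm_cast at this ⊢
      positivity
    · rw [trace_smul, smul_eq_mul, inv_mul_cancel₀ h0]

lemma post_meas (hQT : IsQTraj A μ ℱ ρ X) (n : ℕ) (j : Fin (2 * d)) (a b : Fin k) :
    Measurable[ℱ n] (fun ω => post A j (ρ n ω) a b) := by
  have hρ : ∀ a b, Measurable[ℱ n] (fun ω => ρ n ω a b) := fun a b =>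
    (measurable_pi_apply b).comp ((measurable_pi_apply a).comp (hQT.adapted_ρ n))
  have h1 : ∀ a b, Measurable[ℱ n] (fun ω => (A j * ρ n ω * (A j)ᴴ) a b) := by
    intro a b
    simp only [Matrix.mul_apply]
    exact Finset.measurable_fun_sum _ fun i _ => (Finset.measurable_fun_sum _ fun l _ =>
      (hρ _ _).const_mul _).mul_const _
  have h2 : Measurable[ℱ n] (fun ω => (A j * ρ n ω * (A j)ᴴ).trace) := by
    simp only [Matrix.trace, Matrix.diag]
    exact Finset.measurable_fun_sum _ fun i _ => h1 i i
  simp only [post, Matrix.smul_apply, smul_eq_mul]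
  exact h2.inv.mul (h1 a b)

lemma aux_rho (hA : ∑ j, (A j)ᴴ * A j = 1) (hQT : IsQTraj A μ ℱ ρ X) :
    ∀ᵐ ω ∂μ, ∀ a b, Tendsto (fun n : ℕ => (n : ℂ)⁻¹ *
      ∑ i ∈ range n, (ρ (i + 1) ω a b - (∑ j, A j * ρ i ω * (A j)ᴴ) a b)) atTop (nhds 0) := by
  rw [ae_all_iff]; intro a
  rw [ae_all_iff]; intro b
  have hre := aux_step hQT (fun n j ω => (post A j (ρ n ω) a b).re)
    (fun n j => (Complex.measurable_re.comp (post_meas hQT n j a b)).stronglyMeasurable) 1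
    (fun n j => by
      filter_upwards [hQT.density n] with ω h
      exact (Complex.abs_re_le_norm _).trans (post_bd h j a b))
  have him := aux_step hQT (fun n j ω => (post A j (ρ n ω) a b).im)
    (fun n j => (Complex.measurable_im.comp (post_meas hQT n j a b)).stronglyMeasurable) 1
    (fun n j => by
      filter_upwards [hQT.density n] with ω h
      exact (Complex.abs_im_le_norm _).trans (post_bd h j a b))
  filter_upwards [hre, him, ae_all_iff.2 hQT.density, ae_all_iff.2 (aux_one hA hQT),
    ae_all_iff.2 fun n => ae_all_iff.2 (hQT.update n)] with ω h1 h2 hd h1' hu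
  have e : ∀ i, ρ (i + 1) ω a b - (∑ j, A j * ρ i ω * (A j)ᴴ) a b =
      ((∑ j, (post A j (ρ i ω) a b).re * jmp X i j ω
        - ∑ j, (post A j (ρ i ω) a b).re * ((A j * ρ i ω * (A j)ᴴ).trace).re : ℝ) : ℂ) +
      ((∑ j, (post A j (ρ i ω) a b).im * jmp X i j ω
        - ∑ j, (post A j (ρ i ω) a b).im * ((A j * ρ i ω * (A j)ᴴ).trace).re : ℝ) : ℂ) *
        Complex.I := by
    intro i
    obtain ⟨l, hl⟩ := h1' i
    have e1 : ρ (i + 1) ω a b = post A l (ρ i ω) a b := by rw [hu i l hl]; rfl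
    have e2 : (∑ j, A j * ρ i ω * (A j)ᴴ) a b =
        ∑ j, (((A j * ρ i ω * (A j)ᴴ).trace).re : ℂ) * post A j (ρ i ω) a b := by
      rw [Matrix.sum_apply]
      refine sum_congr rfl fun j _ => ?_
      have := congrFun (congrFun (post_mul (A := A) (hd i) j) a) b
      rw [Matrix.smul_apply, smul_eq_mul] at this
      exact this.symm
    rw [e1, e2]
    simp only [jmp_eq hl]
    apply Complex.ext <;> simp [mul_comm]
  have h3 := ((Complex.continuous_ofReal.tendsto _).comp h1).add
    (((Complex.continuous_ofReal.tendsto _).comp h2).mul_const Complex.I)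
  simp only [Complex.ofReal_zero, zero_mul, add_zero] at h3
  refine h3.congr fun n => ?_
  simp only [e, Function.comp, Complex.ofReal_div, Complex.ofReal_sum, sum_add_distrib,
    ← sum_mul, Complex.ofReal_natCast]
  ring

end

/-- (Law of large numbers.) Under (H1), `X_n / n → m` almost surely. -/
theorem stmt7 {k d : ℕ} (hd : 1 ≤ d)
    (A : Fin (2 * d) → Matrix (Fin k) (Fin k) ℂ)
    (hA : ∑ j, (A j)ᴴ * A j = 1)
    (ρinf : Matrix (Fin k) (Fin k) ℂ) (hρinf : IsDensity ρinf)
    (hinv : (∑ j, A j * ρinf * (A j)ᴴ) = ρinf)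
    (huniq : ∀ σ, IsDensity σ → (∑ j, A j * σ * (A j)ᴴ) = σ → σ = ρinf)
    {Ω : Type} {mΩ : MeasurableSpace Ω} (μ : Measure Ω) [IsProbabilityMeasure μ]
    (ℱ : Filtration ℕ mΩ)
    (ρ : ℕ → Ω → Matrix (Fin k) (Fin k) ℂ) (X : ℕ → Ω → Fin d → ℤ)
    (hQT : IsQTraj A μ ℱ ρ X) :
    ∀ᵐ ω ∂μ,
      Tendsto (fun n : ℕ => fun j => (X n ω j : ℝ) / n) atTop (nhds (mvec A ρinf)) := by
  have hX := fun c : Fin d => aux_step hQT (fun _ j _ => dirR d j c)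
    (fun n j => stronglyMeasurable_const) 1 (fun n j => by
      refine ae_of_all _ fun ω => ?_
      simp only [dirR, dir]
      split_ifs <;> simp)
  filter_upwards [ae_all_iff.2 hX, ae_all_iff.2 hQT.density, ae_all_iff.2 (aux_one hA hQT),
    aux_rho hA hQT] with ω h1 hd h1' hr
  have hS := aux_det A ρinf huniq (fun n => ρ n ω) hd hr
  rw [tendsto_pi_nhds]
  intro c
  have hcont : Continuous (fun σ => mvec A σ c) := by
    unfold mvec
    fun_prop
  have h2 := (hcont.tendsto _).comp hS
  have h0 : Tendsto (fun n : ℕ => (X 0 ω c : ℝ) / n) atTop (nhds 0) :=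
    tendsto_const_div_atTop_nhds_zero_nat _
  have h3 := ((h1 c).add h2).add h0
  rw [zero_add, add_zero] at h3
  refine h3.congr fun n => ?_
  have e1 : ∀ i, ∑ j, dirR d j c * jmp X i j ω = (X (i + 1) ω c : ℝ) - X i ω c := by
    intro i
    obtain ⟨l, hl⟩ := h1' i
    simp only [jmp_eq hl, hl]
    simp [dirR]
  have e2 : mvec A ((n : ℂ)⁻¹ • ∑ i ∈ range n, ρ i ω) c =
      (∑ i ∈ range n, ∑ j, dirR d j c * ((A j * ρ i ω * (A j)ᴴ).trace).re) / n := by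
    unfold mvec
    rw [sum_comm, sum_div]
    refine sum_congr rfl fun j _ => ?_
    rw [Matrix.mul_smul, Matrix.smul_mul, Matrix.mul_sum, Matrix.sum_mul, trace_smul, trace_sum,
      smul_eq_mul, ← Complex.ofReal_natCast, ← Complex.ofReal_inv, Complex.re_ofReal_mul,
      Complex.re_sum, ← mul_sum]
    ring
  simp only [Function.comp, e1]
  rw [e2, sum_sub_distrib, sum_range_sub (fun i => (X i ω c : ℝ))]
  ring
end
end
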